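/- arXiv:1810.02032 — 3 statements merged into one kernel-verified Lean document; each statement's English description precedes it below -/
import Mathlib

section
/- Under Assumptions 1 and 2, along any gradient flow of the empirical risk of a deep linear network on linearly separable data, and for any choice of top singular vector pairs (u_k(t), v_k(t)) of W_k(t): (i) for every 1 ≤ k ≤ L, ‖ W_k(t)/‖W_k(t)‖_F − u_k(t) v_k(t)ᵀ ‖_F → 0 as t → ∞; (ii) for every 1 ≤ k < L, |⟨v_{k+1}(t), u_k(t)⟩| → 1; (iii) |⟨ w_prod(t) / ∏_{k=1}^L ‖W_k(t)‖_F , v_1(t) ⟩| → 1; and (iv) ‖w_prod(t)‖ → ∞. -/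
/-!
Why the layers align.

Along gradient flow `W_{k+1}ᵀ W_{k+1} - W_k W_kᵀ` is constant for every pair of adjacent layers
(`IsGradientFlow.balanced`), so squared Frobenius norms of any two layers differ by a constant.

*The weights diverge* (`IsGradientFlow.tendsto_frobNorm_zero`). The risk decreases at rate
`‖∇R(W)‖²`. The nonzero initial gradient makes it drop strictly below `ℓ(0)`, which keeps the linear
predictor `w` away from the origin (`IsGradientFlow.exists_wprod_lower`). As long as the bottom layer
is bounded, so are all layers and `w`; then `ℓ'` is bounded away from zero at the margins,
separability bounds the gradient of the risk in `w` from below, and since `w ≠ 0` factors through the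
bottom layer, the bottom-layer gradient is bounded below as well
(`le_frobNorm_gradLayer_zero`). The risk is nonnegative, so this cannot go on for infinite total
time. As the speed is also bounded on such a region, the flow cannot keep returning to it either
(`tendsto_atTop_of_energy`): `‖W_k‖_F → ∞` for every `k`. No monotonicity of the norms and no
convexity of `ℓ` is needed.

*The layers become rank one and align.* The last layer is a row vector, so its Frobenius and
spectral norms agree. Testing balancedness against top singular vectors shows that
`‖W_k‖_F² - ‖W_k‖₂²` stays bounded if it does so for the layer above
(`IsGradientFlow.exists_gap_bound`). Since the norms diverge, `‖W_k‖₂ / ‖W_k‖_F → 1`, which is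
equivalent to convergence to the top rank-one part (`tendsto_rank_one`). Testing balancedness against
`v_{k+1}` once more, now with the bound on the non-top part of `W_k`, gives
`⟨v_{k+1}, u_k⟩² ≥ 1 - O(‖W_k‖₂⁻²)` (`IsGradientFlow.tendsto_align`). Following the image of the
bottom right singular vector up through the normalized layers (`tendsto_partialImage`) gives the
alignment of `w`, and `‖w‖ → ∞` because `⟨w, v_0⟩` is asymptotically `± ∏ ‖W_k‖_F`.
-/

open Matrix Filter
open scoped BigOperators

noncomputable section

/-- Euclidean norm of a vector in `ℝ^m`. -/
def vecNorm {m : Type*} [Fintype m] (v : m → ℝ) : ℝ :=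
  Real.sqrt (∑ i, (v i) ^ 2)

/-- Frobenius norm of a real matrix. -/
def frobNorm {m n : Type*} [Fintype m] [Fintype n] (M : Matrix m n ℝ) : ℝ :=
  Real.sqrt (∑ i, ∑ j, (M i j) ^ 2)

/-- Spectral norm (operator 2-norm) of a real matrix. -/
def specNorm {m n : Type*} [Fintype m] [Fintype n] (M : Matrix m n ℝ) : ℝ :=
  sSup {c : ℝ | ∃ v : n → ℝ, vecNorm v = 1 ∧ c = vecNorm (M.mulVec v)}

/-- `(u, v)` is a top singular vector pair of `M`: both are unit vectors,
`M v = ‖M‖₂ u` and `Mᵀ u = ‖M‖₂ v`. -/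
def IsTopSingularPair {m n : Type*} [Fintype m] [Fintype n]
    (M : Matrix m n ℝ) (u : m → ℝ) (v : n → ℝ) : Prop :=
  vecNorm u = 1 ∧ vecNorm v = 1 ∧
    M.mulVec v = specNorm M • u ∧ Mᵀ.mulVec u = specNorm M • v

/-- Parameters of a deep linear network: layer `k` (0-indexed; paper layer `k+1`)
is a matrix mapping `ℝ^{dim k}` to `ℝ^{dim (k+1)}`. -/
abbrev Layers (dim : ℕ → ℕ) := ∀ j : ℕ, Matrix (Fin (dim (j+1))) (Fin (dim j)) ℝ

/-- Product `W_{j-1} ⋯ W_0` of the bottom `j` layers (paper: `W_j ⋯ W_1`). -/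
def prodUpTo {dim : ℕ → ℕ} (W : Layers dim) : ∀ j : ℕ, Matrix (Fin (dim j)) (Fin (dim 0)) ℝ
  | 0 => 1
  | (j+1) => W j * prodUpTo W j

/-- Product `W_{L-1} ⋯ W_j` of the layers from `j` up to the top layer `L-1`
(paper: `W_L ⋯ W_{j+1}`); for `j ≥ L` it is a pseudo-identity. -/
def prodFrom {dim : ℕ → ℕ} (L : ℕ) (W : Layers dim) (j : ℕ) :
    Matrix (Fin (dim L)) (Fin (dim j)) ℝ :=
  if h : j < L then prodFrom L W (j+1) * W j
  else Matrix.of fun i j' => if (i : ℕ) = (j' : ℕ) then 1 else 0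
  termination_by L - j
  decreasing_by omega

/-- The linear predictor `w_prod = (W_L ⋯ W_1)ᵀ ∈ ℝ^d` induced by the network
(recall `dim L = 1`). -/
def wprod {dim : ℕ → ℕ} (L : ℕ) (W : Layers dim) : Fin (dim 0) → ℝ :=
  fun j => ∑ a, prodUpTo W L a j

/-- Empirical risk of a linear predictor `w`: `R(w) = (1/n) ∑ᵢ ℓ(⟨w, zᵢ⟩)`. -/
def riskV {n d : ℕ} (ℓ : ℝ → ℝ) (z : Fin n → Fin d → ℝ) (w : Fin d → ℝ) : ℝ :=
  (n : ℝ)⁻¹ * ∑ i, ℓ (w ⬝ᵥ z i)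

/-- Gradient of the risk w.r.t. the linear predictor: `∇R(w) = (1/n) ∑ᵢ ℓ'(⟨w, zᵢ⟩) zᵢ`. -/
def gradRiskV {n d : ℕ} (ℓ' : ℝ → ℝ) (z : Fin n → Fin d → ℝ) (w : Fin d → ℝ) :
    Fin d → ℝ :=
  (n : ℝ)⁻¹ • ∑ i, ℓ' (w ⬝ᵥ z i) • z i

/-- The partial gradient of the empirical risk with respect to layer `k`:
`∂R/∂W_k = (W_L ⋯ W_{k+1})ᵀ ∇R(w_prod)ᵀ (W_{k-1} ⋯ W_1)ᵀ`. -/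
def gradLayer {dim : ℕ → ℕ} (L : ℕ) (ℓ' : ℝ → ℝ) {n : ℕ}
    (z : Fin n → Fin (dim 0) → ℝ) (W : Layers dim) (k : ℕ) :
    Matrix (Fin (dim (k+1))) (Fin (dim k)) ℝ :=
  (prodFrom L W (k+1))ᵀ *
    (Matrix.of fun (_ : Fin (dim L)) (j : Fin (dim 0)) => gradRiskV ℓ' z (wprod L W) j) *
    (prodUpTo W k)ᵀ

/-- Empirical risk of the network. -/
def riskW {dim : ℕ → ℕ} (L : ℕ) (ℓ : ℝ → ℝ) {n : ℕ}
    (z : Fin n → Fin (dim 0) → ℝ) (W : Layers dim) : ℝ :=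
  riskV ℓ z (wprod L W)

/-- Gradient flow: `dW(t)/dt = −∇R(W(t))` for all `t ≥ 0`, entrywise on each layer. -/
def IsGradientFlow {dim : ℕ → ℕ} (L : ℕ) (ℓ' : ℝ → ℝ) {n : ℕ}
    (z : Fin n → Fin (dim 0) → ℝ) (W : ℝ → Layers dim) : Prop :=
  ∀ t : ℝ, 0 ≤ t → ∀ k < L, ∀ i j,
    HasDerivAt (fun s => W s k i j) (-(gradLayer L ℓ' z (W t) k i j)) t

/-- The initialization-dependent constant `D`. -/
def Dconst {dim : ℕ → ℕ} (L : ℕ) (W0 : Layers dim) : ℝ :=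
  (⨆ k : Fin L, frobNorm (W0 k) ^ 2) - frobNorm (W0 (L-1)) ^ 2
    + ∑ k ∈ Finset.range (L-1),
        specNorm (W0 k * (W0 k)ᵀ - (W0 (k+1))ᵀ * W0 (k+1))

/-- Euclidean norm of a parameter tuple (all entries of the first `L` layers concatenated). -/
def paramNorm {dim : ℕ → ℕ} (L : ℕ) (V : Layers dim) : ℝ :=
  Real.sqrt (∑ k ∈ Finset.range L, frobNorm (V k) ^ 2)

/-- Squared Euclidean norm of the full gradient `∇R(W)`. -/
def gradNormSq {dim : ℕ → ℕ} (L : ℕ) (ℓ' : ℝ → ℝ) {n : ℕ}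
    (z : Fin n → Fin (dim 0) → ℝ) (W : Layers dim) : ℝ :=
  ∑ k ∈ Finset.range L, frobNorm (gradLayer L ℓ' z W k) ^ 2

/-- The data-dependent constant `α = min_{‖ξ‖=1, ξ ⟂ ū} max_{i ∈ S} ⟨ξ, zᵢ⟩`,
where `S` is the set of support vectors. -/
def alphaConst {n d : ℕ} (z : Fin n → Fin d → ℝ) (ubar : Fin d → ℝ) (γ : ℝ) : ℝ :=
  sInf {c : ℝ | ∃ ξ : Fin d → ℝ, vecNorm ξ = 1 ∧ ξ ⬝ᵥ ubar = 0 ∧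
    c = sSup {r : ℝ | ∃ i : Fin n, ubar ⬝ᵥ z i = γ ∧ r = ξ ⬝ᵥ z i}}

/-- Orthogonal projection onto the orthogonal complement of `span(ū)` (for `ū` a unit vector). -/
def projPerp {d : ℕ} (ubar : Fin d → ℝ) (w : Fin d → ℝ) : Fin d → ℝ :=
  w - (w ⬝ᵥ ubar) • ubar

/-! ### Euclidean, Frobenius and spectral norms -/

section LinearAlgebra

variable {m n : Type*} [Fintype m] [Fintype n]

lemma vecNorm_sq (v : m → ℝ) : vecNorm v ^ 2 = v ⬝ᵥ v := by
  rw [vecNorm, Real.sq_sqrt (Finset.sum_nonneg fun i _ => sq_nonneg _)]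
  simp [dotProduct, sq]

lemma vecNorm_nonneg (v : m → ℝ) : 0 ≤ vecNorm v := Real.sqrt_nonneg _

lemma dot_self_nonneg (v : m → ℝ) : 0 ≤ v ⬝ᵥ v := by
  rw [← vecNorm_sq]; positivity

lemma dot_self_of_unit {v : m → ℝ} (h : vecNorm v = 1) : v ⬝ᵥ v = 1 := by
  rw [← vecNorm_sq, h]; norm_num

lemma unit_of_dot_self {v : m → ℝ} (h : v ⬝ᵥ v = 1) : vecNorm v = 1 := by
  have := vecNorm_sq v
  rw [h] at this
  nlinarith [vecNorm_nonneg v]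

lemma frobNorm_nonneg (M : Matrix m n ℝ) : 0 ≤ frobNorm M := Real.sqrt_nonneg _

lemma frobNorm_sq (M : Matrix m n ℝ) : frobNorm M ^ 2 = ∑ i, ∑ j, M i j ^ 2 :=
  Real.sq_sqrt (Finset.sum_nonneg fun i _ => Finset.sum_nonneg fun j _ => sq_nonneg _)

lemma dot_sq_le (a b : m → ℝ) : (a ⬝ᵥ b) ^ 2 ≤ (a ⬝ᵥ a) * (b ⬝ᵥ b) := by
  have := Finset.sum_mul_sq_le_sq_mul_sq Finset.univ a b
  simpa [dotProduct, sq] using this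

lemma mulVec_sq_le (M : Matrix m n ℝ) (x : n → ℝ) :
    (M *ᵥ x) ⬝ᵥ (M *ᵥ x) ≤ frobNorm M ^ 2 * (x ⬝ᵥ x) := by
  rw [frobNorm_sq, Finset.sum_mul, dotProduct]
  refine Finset.sum_le_sum fun i _ => ?_
  have h := dot_sq_le (M i) x
  have h2 : M i ⬝ᵥ M i = ∑ j, M i j ^ 2 := by simp [dotProduct, sq]
  rw [h2] at h
  rw [← sq]
  exact h

lemma specNorm_nonneg (M : Matrix m n ℝ) : 0 ≤ specNorm M := by
  apply Real.sSup_nonneg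
  rintro c ⟨v, -, rfl⟩
  exact vecNorm_nonneg _

lemma mulVec_sq_le_specNorm (M : Matrix m n ℝ) {x : n → ℝ} (hx : x ⬝ᵥ x = 1) :
    (M *ᵥ x) ⬝ᵥ (M *ᵥ x) ≤ specNorm M ^ 2 := by
  rw [← vecNorm_sq]
  have h : vecNorm (M *ᵥ x) ≤ specNorm M := by
    apply le_csSup
    · refine ⟨frobNorm M, ?_⟩
      rintro c ⟨v, hv, rfl⟩
      have h := mulVec_sq_le M v
      rw [dot_self_of_unit hv, mul_one, ← vecNorm_sq] at h
      exact abs_le_of_sq_le_sq' h (frobNorm_nonneg M) |>.2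
    · exact ⟨x, unit_of_dot_self hx, rfl⟩
  gcongr
  exact vecNorm_nonneg _

lemma mulVec_sq_le_specNorm_mul (M : Matrix m n ℝ) (x : n → ℝ) :
    (M *ᵥ x) ⬝ᵥ (M *ᵥ x) ≤ specNorm M ^ 2 * (x ⬝ᵥ x) := by
  rcases (dot_self_nonneg x).eq_or_lt with h | h
  · have := mulVec_sq_le M x
    rw [← h] at this ⊢
    simpa using this
  · have hs : (vecNorm x) ≠ 0 := by
      intro h0
      rw [← vecNorm_sq, h0] at h
      norm_num at h
    have h1 : ((vecNorm x)⁻¹ • x) ⬝ᵥ ((vecNorm x)⁻¹ • x) = 1 := by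
      rw [smul_dotProduct, dotProduct_smul, ← vecNorm_sq]
      simp only [smul_eq_mul]
      field_simp
    have h2 := mulVec_sq_le_specNorm M h1
    rw [mulVec_smul, smul_dotProduct, dotProduct_smul] at h2
    simp only [smul_eq_mul] at h2
    rw [← vecNorm_sq x]
    have h3 : 0 < vecNorm x ^ 2 := by positivity
    rw [← mul_assoc, ← mul_inv, ← sq, inv_mul_le_iff₀ h3] at h2
    linarith

/-- The transpose has the same operator norm; this is the half of that fact which is used. -/
lemma transpose_mulVec_sq_le (M : Matrix m n ℝ) {b : m → ℝ} (hb : b ⬝ᵥ b = 1) :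
    (Mᵀ *ᵥ b) ⬝ᵥ (Mᵀ *ᵥ b) ≤ specNorm M ^ 2 := by
  set q := (Mᵀ *ᵥ b) ⬝ᵥ (Mᵀ *ᵥ b) with hq
  have hq0 : 0 ≤ q := dot_self_nonneg _
  have h1 : q = b ⬝ᵥ (M *ᵥ (Mᵀ *ᵥ b)) := by
    rw [hq, dotProduct_mulVec b M, ← mulVec_transpose]
  have h2 := dot_sq_le b (M *ᵥ (Mᵀ *ᵥ b))
  rw [← h1, hb, one_mul] at h2
  have h3 := mulVec_sq_le_specNorm_mul M (Mᵀ *ᵥ b)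
  rw [← hq] at h3
  by_contra hcon
  push Not at hcon
  have h0 : 0 < q := lt_of_le_of_lt (sq_nonneg _) hcon
  nlinarith

variable {M : Matrix m n ℝ} {u : m → ℝ} {v : n → ℝ}

lemma IsTopSingularPair.bilin (h : IsTopSingularPair M u v) :
    u ⬝ᵥ (M *ᵥ v) = specNorm M := by
  rw [h.2.2.1, dotProduct_smul, dot_self_of_unit h.1]; simp

lemma sum_mul_eq_bilin (M : Matrix m n ℝ) (u : m → ℝ) (v : n → ℝ) :
    ∑ i, ∑ j, M i j * (u i * v j) = u ⬝ᵥ (M *ᵥ v) := by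
  simp only [dotProduct, mulVec, Finset.mul_sum]
  refine Finset.sum_congr rfl fun i _ => Finset.sum_congr rfl fun j _ => by ring

lemma sum_sq_mul_eq (u : m → ℝ) (v : n → ℝ) :
    ∑ i, ∑ j, (u i * v j) ^ 2 = (u ⬝ᵥ u) * (v ⬝ᵥ v) := by
  simp only [dotProduct, Finset.sum_mul_sum]
  refine Finset.sum_congr rfl fun i _ => Finset.sum_congr rfl fun j _ => by ring

/-- Squared Frobenius distance from a rescaling of `M` to a multiple of the top rank-one part. -/
lemma frobNorm_smul_sub_sq (h : IsTopSingularPair M u v) (a b : ℝ) :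
    frobNorm (a • M - b • vecMulVec u v) ^ 2
      = a ^ 2 * frobNorm M ^ 2 - 2 * a * b * specNorm M + b ^ 2 := by
  have h1 := sum_mul_eq_bilin M u v
  rw [h.bilin] at h1
  have h2 := sum_sq_mul_eq u v
  rw [dot_self_of_unit h.1, dot_self_of_unit h.2.1, one_mul] at h2
  have h3 : ∀ i j, (a • M - b • vecMulVec u v) i j ^ 2
      = a ^ 2 * M i j ^ 2 - 2 * a * b * (M i j * (u i * v j)) + b ^ 2 * (u i * v j) ^ 2 := by
    intro i j
    simp only [Matrix.sub_apply, Matrix.smul_apply, vecMulVec_apply, smul_eq_mul]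
    ring
  rw [frobNorm_sq, frobNorm_sq]
  simp only [h3, Finset.sum_add_distrib, Finset.sum_sub_distrib, ← Finset.mul_sum, h1, h2]
  ring

lemma IsTopSingularPair.specNorm_sq_le (h : IsTopSingularPair M u v) :
    specNorm M ^ 2 ≤ frobNorm M ^ 2 := by
  have := frobNorm_smul_sub_sq h 1 (specNorm M)
  nlinarith [sq_nonneg (frobNorm ((1 : ℝ) • M - specNorm M • vecMulVec u v))]

lemma frobNorm_transpose (M : Matrix m n ℝ) : frobNorm Mᵀ = frobNorm M := by
  rw [frobNorm, Finset.sum_comm]; rfl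

/-- Away from `u`, the matrix `Mᵀ` acts only through the non-top singular values, whose squares sum
to `‖M‖_F² - ‖M‖₂²`. -/
lemma IsTopSingularPair.transpose_mulVec_sq_le (h : IsTopSingularPair M u v)
    {b : m → ℝ} (hb : b ⬝ᵥ b = 1) :
    (Mᵀ *ᵥ b) ⬝ᵥ (Mᵀ *ᵥ b)
      ≤ specNorm M ^ 2 * (b ⬝ᵥ u) ^ 2 + (frobNorm M ^ 2 - specNorm M ^ 2) := by
  set s := specNorm M with hs
  set E : Matrix m n ℝ := (1 : ℝ) • M - s • vecMulVec u v with hE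
  have h1 : frobNorm E ^ 2 = frobNorm M ^ 2 - s ^ 2 := by
    rw [hE, frobNorm_smul_sub_sq h, ← hs]; ring
  have h2 := mulVec_sq_le Eᵀ b
  rw [frobNorm_transpose, h1, hb, mul_one] at h2
  have h3 : Mᵀ *ᵥ b = Eᵀ *ᵥ b + (s * (b ⬝ᵥ u)) • v := by
    have : M = E + s • vecMulVec u v := by rw [hE]; simp
    conv_lhs => rw [this]
    rw [transpose_add, add_mulVec, transpose_smul, smul_mulVec, transpose_vecMulVec,
      vecMulVec_mulVec, dotProduct_comm u b]
    simp [smul_smul]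
  -- the two summands are orthogonal
  have h4 : v ⬝ᵥ (Eᵀ *ᵥ b) = 0 := by
    have e1 : Eᵀ *ᵥ b = Mᵀ *ᵥ b - (s * (b ⬝ᵥ u)) • v := by rw [h3]; simp
    rw [e1, dotProduct_sub, dotProduct_smul, dot_self_of_unit h.2.1, dotProduct_mulVec,
      vecMul_transpose, h.2.2.1, smul_dotProduct, dotProduct_comm u b]
    simp [hs]
  rw [h3]
  simp only [add_dotProduct, dotProduct_add, smul_dotProduct, dotProduct_smul, smul_eq_mul,
    dot_self_of_unit h.2.1, h4, dotProduct_comm _ v]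
  nlinarith

lemma sq_eq_one_of_unique [Unique m] (hu : vecNorm u = 1) : u default ^ 2 = 1 := by
  have := dot_self_of_unit hu
  simpa [dotProduct, sq] using this

/-- A matrix with a single row has rank one, so its two norms agree. -/
lemma IsTopSingularPair.frobNorm_eq_of_unique [Unique m] (h : IsTopSingularPair M u v) :
    frobNorm M ^ 2 = specNorm M ^ 2 := by
  have h1 : (Mᵀ *ᵥ u) ⬝ᵥ (Mᵀ *ᵥ u) = specNorm M ^ 2 := by
    rw [h.2.2.2, smul_dotProduct, dotProduct_smul, dot_self_of_unit h.2.1]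
    simp [sq]
  have h2 := sq_eq_one_of_unique h.1
  rw [← h1, frobNorm_sq]
  simp only [dotProduct, mulVec, Fintype.sum_unique, transpose_apply]
  refine Finset.sum_congr rfl fun j _ => ?_
  linear_combination (-(M default j) ^ 2) * h2

/-- If two unit-ball vectors `b`, `p` are almost aligned with a unit vector `a`, they are almost
aligned with each other. -/
lemma dot_near (a b p : m → ℝ) (ha : a ⬝ᵥ a = 1) (hb : b ⬝ᵥ b = 1) (hp : p ⬝ᵥ p ≤ 1) :
    (b ⬝ᵥ p - (b ⬝ᵥ a) * (a ⬝ᵥ p)) ^ 2 ≤ (1 - (b ⬝ᵥ a) ^ 2) * (1 - (a ⬝ᵥ p) ^ 2) := by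
  have h := dot_sq_le (b - (b ⬝ᵥ a) • a) (p - (a ⬝ᵥ p) • a)
  have e1 : (b - (b ⬝ᵥ a) • a) ⬝ᵥ (p - (a ⬝ᵥ p) • a) = b ⬝ᵥ p - (b ⬝ᵥ a) * (a ⬝ᵥ p) := by
    simp only [sub_dotProduct, dotProduct_sub, smul_dotProduct, dotProduct_smul, smul_eq_mul, ha]
    ring
  have e2 : (b - (b ⬝ᵥ a) • a) ⬝ᵥ (b - (b ⬝ᵥ a) • a) = 1 - (b ⬝ᵥ a) ^ 2 := by
    simp only [sub_dotProduct, dotProduct_sub, smul_dotProduct, dotProduct_smul, smul_eq_mul, ha,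
      hb, dotProduct_comm a b]
    ring
  have e3 : (p - (a ⬝ᵥ p) • a) ⬝ᵥ (p - (a ⬝ᵥ p) • a) = p ⬝ᵥ p - (a ⬝ᵥ p) ^ 2 := by
    simp only [sub_dotProduct, dotProduct_sub, smul_dotProduct, dotProduct_smul, smul_eq_mul, ha,
      dotProduct_comm p a]
    ring
  rw [e1, e2, e3] at h
  have h5 := dot_self_nonneg (b - (b ⬝ᵥ a) • a)
  rw [e2] at h5
  refine h.trans (mul_le_mul_of_nonneg_left (by linarith) h5)

end LinearAlgebra

/-! ### Partial products of the layers and the layerwise gradients -/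

section Products

variable {dim : ℕ → ℕ} {L : ℕ}

lemma prodFrom_of_lt (W : Layers dim) {j : ℕ} (h : j < L) :
    prodFrom L W j = prodFrom L W (j + 1) * W j := by
  rw [prodFrom, dif_pos h]

lemma prodFrom_self (W : Layers dim) : prodFrom L W L = 1 := by
  rw [prodFrom, dif_neg (lt_irrefl L)]
  ext i j
  simp [Matrix.one_apply, Fin.ext_iff]

lemma prodFrom_mul_prodUpTo (W : Layers dim) {j : ℕ} (h : j ≤ L) :
    prodFrom L W j * prodUpTo W j = prodUpTo W L := by
  have key : ∀ j ≤ L, prodFrom L W j * prodUpTo W j = prodFrom L W 0 * prodUpTo W 0 := by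
    intro j
    induction j with
    | zero => intro _; rfl
    | succ j ih =>
      intro hj
      rw [← ih (by omega), prodFrom_of_lt W (show j < L by omega), prodUpTo, Matrix.mul_assoc]
  rw [key j h, ← key L le_rfl, prodFrom_self, Matrix.one_mul]

/-- Directional derivative of `W ↦ W_{j-1} ⋯ W_0` at `W` in the direction `D`. -/
def dprod (W D : Layers dim) : ∀ j : ℕ, Matrix (Fin (dim j)) (Fin (dim 0)) ℝ
  | 0 => 0
  | (j+1) => D j * prodUpTo W j + W j * dprod W D j

lemma prodFrom_mul_dprod (W D : Layers dim) {j : ℕ} (h : j ≤ L) :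
    prodFrom L W j * dprod W D j
      = ∑ k ∈ Finset.range j, prodFrom L W (k + 1) * D k * prodUpTo W k := by
  induction j with
  | zero => simp [dprod]
  | succ j ih =>
    rw [Finset.sum_range_succ, ← ih (by omega), prodFrom_of_lt W (show j < L by omega), dprod,
      Matrix.mul_add, Matrix.mul_assoc, Matrix.mul_assoc, add_comm]

lemma dprod_eq (W D : Layers dim) :
    dprod W D L = ∑ k ∈ Finset.range L, prodFrom L W (k + 1) * D k * prodUpTo W k := by
  rw [← prodFrom_mul_dprod W D le_rfl, prodFrom_self, Matrix.one_mul]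

lemma hasDerivAt_prodUpTo {W : ℝ → Layers dim} {D : Layers dim} {t : ℝ}
    (hW : ∀ k < L, ∀ i j, HasDerivAt (fun s => W s k i j) (D k i j) t) {j : ℕ} (h : j ≤ L) :
    ∀ a b, HasDerivAt (fun s => prodUpTo (W s) j a b) (dprod (W t) D j a b) t := by
  induction j with
  | zero =>
    intro a b
    exact hasDerivAt_const t _
  | succ j ih =>
    intro a b
    simp only [prodUpTo, dprod, Matrix.mul_apply, Matrix.add_apply, ← Finset.sum_add_distrib]
    exact HasDerivAt.fun_sum fun i _ => (hW j (by omega) a i).mul (ih (by omega) i b)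

variable {n : ℕ} {ℓ' : ℝ → ℝ} {z : Fin n → Fin (dim 0) → ℝ}

/-- The identity behind balancedness of the layers under gradient flow. -/
lemma transpose_mul_gradLayer (W : Layers dim) {k : ℕ} (hk : k + 1 < L) :
    (W (k + 1))ᵀ * gradLayer L ℓ' z W (k + 1) = gradLayer L ℓ' z W k * (W k)ᵀ := by
  simp only [gradLayer]
  rw [prodFrom_of_lt W hk, prodUpTo]
  simp only [Matrix.transpose_mul, Matrix.mul_assoc]

lemma sum_mul_eq_trace {m n : Type*} [Fintype m] [Fintype n] (A B : Matrix m n ℝ) :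
    ∑ i, ∑ j, A i j * B i j = (Aᵀ * B).trace := by
  simp only [Matrix.trace, Matrix.diag, Matrix.mul_apply, Matrix.transpose_apply]
  rw [Finset.sum_comm]

lemma frobNorm_sq_eq_trace {m n : Type*} [Fintype m] [Fintype n] (A : Matrix m n ℝ) :
    frobNorm A ^ 2 = (Aᵀ * A).trace := by
  rw [← sum_mul_eq_trace, frobNorm_sq]
  simp only [sq]

/-- The algebraic half of the energy identity: pairing the gradient in the linear predictor with the
velocity that the negative layerwise gradients induce on it gives `-‖∇R(W)‖²`. -/
lemma gradRiskV_dot_dprod (W : Layers dim) :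
    gradRiskV ℓ' z (wprod L W) ⬝ᵥ
        (fun j => ∑ a, dprod W (fun k => -gradLayer L ℓ' z W k) L a j)
      = -gradNormSq L ℓ' z W := by
  set g := gradRiskV ℓ' z (wprod L W) with hg
  set A : Matrix (Fin (dim L)) (Fin (dim 0)) ℝ := Matrix.of fun _ j => g j with hA
  have h1 : g ⬝ᵥ (fun j => ∑ a, dprod W (fun k => -gradLayer L ℓ' z W k) L a j)
      = (Aᵀ * dprod W (fun k => -gradLayer L ℓ' z W k) L).trace := by
    rw [← sum_mul_eq_trace, Finset.sum_comm]
    simp [dotProduct, Finset.mul_sum, hA]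
  rw [h1, dprod_eq, Matrix.mul_sum, Matrix.trace_sum, gradNormSq, ← Finset.sum_neg_distrib]
  refine Finset.sum_congr rfl fun k _ => ?_
  have h2 : (gradLayer L ℓ' z W k)ᵀ = prodUpTo W k * Aᵀ * prodFrom L W (k + 1) := by
    simp only [gradLayer, Matrix.transpose_mul, Matrix.transpose_transpose, Matrix.mul_assoc]
    rfl
  rw [frobNorm_sq_eq_trace, h2, Matrix.mul_neg, Matrix.neg_mul, Matrix.mul_neg, Matrix.trace_neg,
    ← Matrix.mul_assoc, Matrix.trace_mul_comm]
  simp only [Matrix.mul_assoc]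

lemma sum_mul_gradLayer_zero (hL : 1 ≤ L) (W : Layers dim) :
    ∑ i, ∑ j, W 0 i j * gradLayer L ℓ' z W 0 i j
      = gradRiskV ℓ' z (wprod L W) ⬝ᵥ wprod L W := by
  set g := gradRiskV ℓ' z (wprod L W) with hg
  set A : Matrix (Fin (dim L)) (Fin (dim 0)) ℝ := Matrix.of fun _ j => g j with hA
  have h0 : prodFrom L W 1 * W 0 = prodUpTo W L := by
    rw [← prodFrom_mul_prodUpTo W hL]; simp [prodUpTo]
  have h1 : gradLayer L ℓ' z W 0 = (prodFrom L W 1)ᵀ * A := by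
    simp [gradLayer, prodUpTo, hA, hg]
  rw [sum_mul_eq_trace, h1, ← Matrix.mul_assoc, ← Matrix.transpose_mul, h0, ← sum_mul_eq_trace,
    Finset.sum_comm]
  simp [dotProduct, wprod, hA, Finset.mul_sum, mul_comm]

/-- The bottom-layer gradient controls the directional derivative of the risk, as a function of the
linear predictor `w`, along a unit vector `a`: pair it with the rank-one matrix `W_0 w aᵀ` and apply
Cauchy-Schwarz. -/
lemma le_frobNorm_gradLayer_zero (hL : 1 ≤ L) (W : Layers dim)
    (a : Fin (dim 0) → ℝ) (ha : a ⬝ᵥ a = 1) :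
    (wprod L W ⬝ᵥ wprod L W) * (gradRiskV ℓ' z (wprod L W) ⬝ᵥ a) ^ 2
      ≤ frobNorm (gradLayer L ℓ' z W 0) ^ 2 * frobNorm (W 0) ^ 2 := by
  set g := gradRiskV ℓ' z (wprod L W) with hg
  set w := wprod L W with hw
  set A : Matrix (Fin (dim L)) (Fin (dim 0)) ℝ := Matrix.of fun _ j => g j with hA
  have h0 : prodFrom L W 1 * W 0 = prodUpTo W L := by
    rw [← prodFrom_mul_prodUpTo W hL]; simp [prodUpTo]
  have h1 : gradLayer L ℓ' z W 0 = (prodFrom L W 1)ᵀ * A := by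
    simp [gradLayer, prodUpTo, hA, hg, hw]
  -- the pairing of the gradient with the test matrix `W_0 w aᵀ`
  have hq : (W 0 *ᵥ w) ⬝ᵥ (gradLayer L ℓ' z W 0 *ᵥ a) = (w ⬝ᵥ w) * (g ⬝ᵥ a) := by
    rw [h1, ← Matrix.mulVec_mulVec, Matrix.dotProduct_mulVec, Matrix.vecMul_transpose,
      Matrix.mulVec_mulVec, h0]
    have e1 : A *ᵥ a = fun _ => g ⬝ᵥ a := by
      ext i; simp [hA, Matrix.mulVec]
    rw [e1]
    simp only [dotProduct, Matrix.mulVec, ← Finset.sum_mul]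
    congr 1
    rw [Finset.sum_comm]
    refine Finset.sum_congr rfl fun j _ => ?_
    rw [← Finset.sum_mul]
    rfl
  have c1 := dot_sq_le (W 0 *ᵥ w) (gradLayer L ℓ' z W 0 *ᵥ a)
  have c2 := mulVec_sq_le (W 0) w
  have c3 := mulVec_sq_le (gradLayer L ℓ' z W 0) a
  rw [ha, mul_one] at c3
  rw [hq] at c1
  have c4 := mul_le_mul c2 c3 (dot_self_nonneg _) (mul_nonneg (sq_nonneg _) (dot_self_nonneg _))
  have c5 := c1.trans c4
  rcases (dot_self_nonneg w).eq_or_lt with h | h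
  · rw [← h]; simp only [zero_mul]; positivity
  · have : (w ⬝ᵥ w) * ((w ⬝ᵥ w) * (g ⬝ᵥ a) ^ 2)
        ≤ (w ⬝ᵥ w) * (frobNorm (gradLayer L ℓ' z W 0) ^ 2 * frobNorm (W 0) ^ 2) := by
      linarith
    exact le_of_mul_le_mul_left this h

lemma prodUpTo_mulVec_sq_le (W : Layers dim) (x : Fin (dim 0) → ℝ) (j : ℕ) :
    (prodUpTo W j *ᵥ x) ⬝ᵥ (prodUpTo W j *ᵥ x)
      ≤ (∏ k ∈ Finset.range j, frobNorm (W k) ^ 2) * (x ⬝ᵥ x) := by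
  induction j with
  | zero => simp [prodUpTo]
  | succ j ih =>
    rw [prodUpTo, ← Matrix.mulVec_mulVec, Finset.prod_range_succ]
    refine (mulVec_sq_le _ _).trans ?_
    have := mul_le_mul_of_nonneg_left ih (sq_nonneg (frobNorm (W j)))
    linarith

lemma wprod_dot (W : Layers dim) (x : Fin (dim 0) → ℝ) :
    wprod L W ⬝ᵥ x = ∑ a, (prodUpTo W L *ᵥ x) a := by
  simp only [wprod, dotProduct, Matrix.mulVec, Finset.sum_mul]
  rw [Finset.sum_comm]

lemma wprod_dot_sq_eq (hdimL : dim L = 1) (W : Layers dim) (x : Fin (dim 0) → ℝ) :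
    (wprod L W ⬝ᵥ x) ^ 2 = (prodUpTo W L *ᵥ x) ⬝ᵥ (prodUpTo W L *ᵥ x) := by
  rw [wprod_dot]
  have : Unique (Fin (dim L)) := by rw [hdimL]; infer_instance
  simp [dotProduct, sq]

lemma wprod_sq_le (hdimL : dim L = 1) (W : Layers dim) :
    wprod L W ⬝ᵥ wprod L W ≤ ∏ k ∈ Finset.range L, frobNorm (W k) ^ 2 := by
  have h1 := prodUpTo_mulVec_sq_le W (wprod L W) L
  rw [← wprod_dot_sq_eq hdimL] at h1
  rcases (dot_self_nonneg (wprod L W)).eq_or_lt with h | h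
  · rw [← h]; exact Finset.prod_nonneg fun k _ => sq_nonneg _
  · rw [sq] at h1
    exact le_of_mul_le_mul_right h1 h

end Products

/-! ### Gradient flow: decrease of the risk and balancedness -/

section Flow

variable {dim : ℕ → ℕ} {L n : ℕ} {ℓ ℓ' : ℝ → ℝ} {z : Fin n → Fin (dim 0) → ℝ}
  {W : ℝ → Layers dim}

lemma IsGradientFlow.hasDerivAt_wprod (hflow : IsGradientFlow L ℓ' z W) {t : ℝ} (ht : 0 ≤ t)
    (j : Fin (dim 0)) :
    HasDerivAt (fun s => wprod L (W s) j)
      (∑ a, dprod (W t) (fun k => -gradLayer L ℓ' z (W t) k) L a j) t := by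
  refine HasDerivAt.fun_sum fun a _ => ?_
  exact hasDerivAt_prodUpTo (D := fun k => -gradLayer L ℓ' z (W t) k) (hflow t ht) le_rfl a j

lemma IsGradientFlow.hasDerivAt_risk (hderiv : ∀ s : ℝ, HasDerivAt ℓ (ℓ' s) s)
    (hflow : IsGradientFlow L ℓ' z W) {t : ℝ} (ht : 0 ≤ t) :
    HasDerivAt (fun s => riskW L ℓ z (W s)) (-gradNormSq L ℓ' z (W t)) t := by
  rw [← gradRiskV_dot_dprod]
  set D : Fin (dim 0) → ℝ :=
    fun j => ∑ a, dprod (W t) (fun k => -gradLayer L ℓ' z (W t) k) L a j with hD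
  have h1 : ∀ i, HasDerivAt (fun s => wprod L (W s) ⬝ᵥ z i) (D ⬝ᵥ z i) t := fun i =>
    HasDerivAt.fun_sum fun j _ => (hflow.hasDerivAt_wprod ht j).mul_const (z i j)
  have h2 : HasDerivAt (fun s => riskW L ℓ z (W s))
      ((n : ℝ)⁻¹ * ∑ i, ℓ' (wprod L (W t) ⬝ᵥ z i) * (D ⬝ᵥ z i)) t :=
    (HasDerivAt.fun_sum fun i _ => (hderiv _).comp t (h1 i)).const_mul _
  convert h2 using 1
  rw [gradRiskV, smul_dotProduct, sum_dotProduct, smul_eq_mul]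
  congr 1
  refine Finset.sum_congr rfl fun i _ => ?_
  rw [smul_dotProduct, smul_eq_mul, dotProduct_comm (z i) D]

lemma gradNormSq_nonneg (W : Layers dim) : 0 ≤ gradNormSq L ℓ' z W :=
  Finset.sum_nonneg fun _ _ => sq_nonneg _

lemma IsGradientFlow.balanced (hflow : IsGradientFlow L ℓ' z W) {k : ℕ} (hk : k + 1 < L)
    {t : ℝ} (ht : 0 ≤ t) :
    (W t (k + 1))ᵀ * W t (k + 1) - W t k * (W t k)ᵀ
      = (W 0 (k + 1))ᵀ * W 0 (k + 1) - W 0 k * (W 0 k)ᵀ := by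
  ext a b
  have hd : ∀ s, 0 ≤ s → HasDerivAt
      (fun s => ((W s (k + 1))ᵀ * W s (k + 1) - W s k * (W s k)ᵀ) a b) 0 s := by
    intro s hs
    have e1 := congrFun (congrFun (transpose_mul_gradLayer (ℓ' := ℓ') (z := z) (W s) hk) a) b
    have e2 := congrFun (congrFun (transpose_mul_gradLayer (ℓ' := ℓ') (z := z) (W s) hk) b) a
    simp only [Matrix.mul_apply, Matrix.transpose_apply, Matrix.sub_apply] at e1 e2 ⊢
    have h1 := HasDerivAt.fun_sum (u := Finset.univ) fun i _ =>
      (hflow s hs (k + 1) hk i a).mul (hflow s hs (k + 1) hk i b)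
    have h2 := HasDerivAt.fun_sum (u := Finset.univ) fun i _ =>
      (hflow s hs k (by omega) a i).mul (hflow s hs k (by omega) b i)
    refine (h1.sub h2).congr_deriv ?_
    have c1 : ∑ i, gradLayer L ℓ' z (W s) (k + 1) i a * W s (k + 1) i b
        = ∑ i, W s (k + 1) i b * gradLayer L ℓ' z (W s) (k + 1) i a :=
      Finset.sum_congr rfl fun i _ => mul_comm _ _
    have c2 : ∑ i, W s k a i * gradLayer L ℓ' z (W s) k b i
        = ∑ i, gradLayer L ℓ' z (W s) k b i * W s k a i :=
      Finset.sum_congr rfl fun i _ => mul_comm _ _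
    simp only [Finset.sum_add_distrib, neg_mul, mul_neg, Finset.sum_neg_distrib]
    linarith
  exact constant_of_has_deriv_right_zero
    (fun s hs => (hd s hs.1).continuousAt.continuousWithinAt)
    (fun s hs => (hd s hs.1).hasDerivWithinAt) t ⟨ht, le_rfl⟩

lemma IsGradientFlow.frobNorm_balanced (hflow : IsGradientFlow L ℓ' z W) {k : ℕ}
    (hk : k + 1 < L) {t : ℝ} (ht : 0 ≤ t) :
    frobNorm (W t (k + 1)) ^ 2 - frobNorm (W t k) ^ 2
      = frobNorm (W 0 (k + 1)) ^ 2 - frobNorm (W 0 k) ^ 2 := by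
  have h := congrArg Matrix.trace (hflow.balanced hk ht)
  simp only [Matrix.trace_sub, Matrix.trace_mul_comm (W _ k), ← frobNorm_sq_eq_trace] at h
  exact h

lemma IsGradientFlow.frobNorm_sq_eq (hflow : IsGradientFlow L ℓ' z W) {k : ℕ} (hk : k < L)
    {t : ℝ} (ht : 0 ≤ t) :
    frobNorm (W t k) ^ 2
      = frobNorm (W t 0) ^ 2 + (frobNorm (W 0 k) ^ 2 - frobNorm (W 0 0) ^ 2) := by
  induction k with
  | zero => ring
  | succ k ih =>
    have := hflow.frobNorm_balanced hk ht
    have := ih (by omega)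
    linarith

lemma IsGradientFlow.hasDerivAt_frobNorm_sq (hL : 1 ≤ L) (hflow : IsGradientFlow L ℓ' z W)
    {t : ℝ} (ht : 0 ≤ t) :
    HasDerivAt (fun s => frobNorm (W s 0) ^ 2)
      (-2 * (gradRiskV ℓ' z (wprod L (W t)) ⬝ᵥ wprod L (W t))) t := by
  simp only [frobNorm_sq]
  have h := HasDerivAt.fun_sum (u := Finset.univ) fun i _ =>
    HasDerivAt.fun_sum (u := Finset.univ) fun j _ => (hflow t ht 0 hL i j).pow 2
  refine HasDerivAt.congr_deriv h ?_
  rw [← sum_mul_gradLayer_zero hL]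
  simp only [Finset.mul_sum]
  refine Finset.sum_congr rfl fun i _ => Finset.sum_congr rfl fun j _ => ?_
  simp only [Nat.cast_ofNat]
  ring

end Flow

/-! ### Divergence of the weights -/

section Divergence

lemma hasDerivAt_max_sq (y : ℝ) :
    HasDerivAt (fun y : ℝ => max y 0 ^ 2) (2 * max y 0) y := by
  rcases lt_trichotomy y 0 with h | rfl | h
  · have : (fun y : ℝ => max y 0 ^ 2) =ᶠ[nhds y] fun _ => 0 := by
      filter_upwards [gt_mem_nhds h] with x hx
      rw [max_eq_right hx.le]; norm_num
    rw [max_eq_right h.le, mul_zero]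
    exact (hasDerivAt_const y (0 : ℝ)).congr_of_eventuallyEq this
  · have h : (fun y : ℝ => max y 0 ^ 2) =O[nhds 0] fun x => ‖x - 0‖ ^ 2 := by
      refine Asymptotics.IsBigO.of_bound 1 (Eventually.of_forall fun x => ?_)
      rw [sub_zero, norm_pow, norm_pow, norm_norm, one_mul]
      exact pow_le_pow_left₀ (norm_nonneg _)
        (by simpa using abs_max_le_max_abs_abs (a := x) (b := 0)) 2
    have := (h.hasFDerivAt (by norm_num)).hasDerivAt
    simpa using this
  · have : (fun y : ℝ => max y 0 ^ 2) =ᶠ[nhds y] fun x => x ^ 2 := by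
      filter_upwards [lt_mem_nhds h] with x hx
      rw [max_eq_left hx.le]
    rw [max_eq_left h.le]
    have h2 := (hasDerivAt_pow 2 y).congr_of_eventuallyEq this
    simpa using h2

lemma antitoneOn_of_hasDerivAt {f f' : ℝ → ℝ} {a : ℝ}
    (hf : ∀ t, a ≤ t → HasDerivAt f (f' t) t) (hf' : ∀ t, a ≤ t → f' t ≤ 0) :
    AntitoneOn f (Set.Ici a) :=
  antitoneOn_of_hasDerivWithinAt_nonpos (convex_Ici a)
    (fun t ht => (hf t ht).continuousAt.continuousWithinAt)
    (fun t ht => (hf t (interior_subset ht)).hasDerivWithinAt)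
    (fun t ht => hf' t (interior_subset ht))

lemma exists_tendsto_of_antitoneOn {f : ℝ → ℝ} {a : ℝ} (hf : AntitoneOn f (Set.Ici a))
    (h0 : ∀ t, a ≤ t → 0 ≤ f t) : ∃ l, Tendsto f atTop (nhds l) := by
  have h1 : Antitone fun t => f (max a t) := fun s t hst =>
    hf (le_max_left a s) (le_max_left a t) (max_le_max le_rfl hst)
  have h2 := tendsto_atTop_ciInf h1 ⟨0, by rintro _ ⟨t, rfl⟩; exact h0 _ (le_max_left a t)⟩
  refine ⟨_, h2.congr' ?_⟩
  filter_upwards [eventually_ge_atTop a] with t ht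
  rw [max_eq_right ht]

/-- An escape criterion: `f` is a nonnegative decreasing energy, which on every sublevel set of `N`
decreases at a rate bounded away from zero while `N` moves at bounded speed. Then `N` cannot return
to a sublevel set at arbitrarily late times. -/
lemma tendsto_atTop_of_energy {f f' N N' : ℝ → ℝ} {a : ℝ}
    (hf : ∀ t, a ≤ t → HasDerivAt f (f' t) t) (hf' : ∀ t, a ≤ t → f' t ≤ 0)
    (hf0 : ∀ t, a ≤ t → 0 ≤ f t)
    (hN : ∀ t, a ≤ t → HasDerivAt N (N' t) t) (hN0 : ∀ t, a ≤ t → 0 ≤ N t)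
    (hrate : ∀ R, 0 < R → ∃ c C : ℝ, 0 < c ∧ 0 ≤ C ∧
      ∀ t, a ≤ t → N t ≤ R → f' t ≤ -c ∧ |N' t| ≤ C) :
    Tendsto N atTop atTop := by
  refine tendsto_atTop.2 fun b => ?_
  set R := |b| + 1 with hR
  have hRpos : 0 < R := by positivity
  obtain ⟨c, C, hc, hC, hcC⟩ := hrate R hRpos
  set K := 2 * R * C / c with hK
  have hK0 : 0 ≤ K := by positivity
  have hKc : K * c = 2 * R * C := by rw [hK]; field_simp
  -- a cutoff of `N` supported on the sublevel set `N < R`; `K * f` dominates its variation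
  set φ : ℝ → ℝ := fun t => max (R - N t) 0 ^ 2 with hφ
  have hφd : ∀ t, a ≤ t → HasDerivAt φ (2 * max (R - N t) 0 * -(N' t)) t := fun t ht =>
    HasDerivAt.comp t (h₂ := fun y : ℝ => max y 0 ^ 2) (hasDerivAt_max_sq (R - N t))
      ((hN t ht).const_sub R)
  have hg : AntitoneOn (fun t => K * f t + φ t) (Set.Ici a) := by
    refine antitoneOn_of_hasDerivAt (fun t ht => ((hf t ht).const_mul K).add (hφd t ht)) ?_
    intro t ht
    rcases le_total (N t) R with h | h
    · obtain ⟨h1, h2⟩ := hcC t ht h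
      rw [max_eq_left (by linarith)]
      have h3 : (R - N t) * -(N' t) ≤ R * C := by
        have e1 : -(N' t) ≤ C := (neg_le_abs _).trans h2
        have e2 : R - N t ≤ R := by linarith [hN0 t ht]
        calc (R - N t) * -(N' t) ≤ (R - N t) * C :=
              mul_le_mul_of_nonneg_left e1 (by linarith)
          _ ≤ R * C := mul_le_mul_of_nonneg_right e2 hC
      have h4 : K * f' t ≤ K * -c := mul_le_mul_of_nonneg_left h1 hK0
      nlinarith
    · rw [max_eq_right (by linarith)]
      have := mul_nonneg hK0 (neg_nonneg.2 (hf' t ht))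
      linarith
  obtain ⟨l₁, hl₁⟩ := exists_tendsto_of_antitoneOn hg fun t ht => by
    exact add_nonneg (mul_nonneg hK0 (hf0 t ht)) (sq_nonneg _)
  obtain ⟨l₂, hl₂⟩ := exists_tendsto_of_antitoneOn (antitoneOn_of_hasDerivAt hf hf') hf0
  have hφl : Tendsto φ atTop (nhds (l₁ - K * l₂)) :=
    (hl₁.sub (hl₂.const_mul K)).congr fun t => by ring
  set m := l₁ - K * l₂
  have hm : m ≤ 0 := by
    by_contra hm
    push Not at hm
    obtain ⟨T, hT⟩ := eventually_atTop.1
      ((hφl.eventually (lt_mem_nhds hm)).and (eventually_ge_atTop a))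
    have hlow : ∀ t, T ≤ t → f' t ≤ -c := fun t ht => by
      obtain ⟨h1, h2⟩ := hT t ht
      refine (hcC t h2 ?_).1
      by_contra hcon
      push Not at hcon
      simp only [hφ] at h1
      rw [max_eq_right (by linarith)] at h1
      norm_num at h1
    have haT : a ≤ T := (hT T le_rfl).2
    have hanti : AntitoneOn (fun t => f t + c * t) (Set.Ici T) :=
      antitoneOn_of_hasDerivAt
        (fun t ht => (hf t (haT.trans ht)).add ((hasDerivAt_id t).const_mul c))
        (fun t ht => by linarith [hlow t ht])
    have hs : 0 ≤ f T / c + 1 := by have := hf0 T haT; positivity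
    have h1 := hanti (Set.mem_Ici.2 le_rfl) (Set.mem_Ici.2 (le_add_of_nonneg_right hs))
      (le_add_of_nonneg_right hs)
    have h2 := hf0 (T + (f T / c + 1)) (by linarith)
    simp only at h1
    have h3 : c * (T + (f T / c + 1)) = c * T + f T + c := by field_simp; ring
    linarith
  filter_upwards [hφl.eventually (gt_mem_nhds (show m < 1 by linarith))] with t ht
  by_contra hcon
  push Not at hcon
  have h1 : 1 ≤ R - N t := by rw [hR]; linarith [le_abs_self b]
  simp only [hφ] at ht
  rw [max_eq_left (by linarith)] at ht
  nlinarith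

variable {dim : ℕ → ℕ} {L n : ℕ} {ℓ ℓ' : ℝ → ℝ} {z : Fin n → Fin (dim 0) → ℝ}
  {W : ℝ → Layers dim}

lemma eq_zero_of_frobNorm_sq {m n : Type*} [Fintype m] [Fintype n] {M : Matrix m n ℝ}
    (h : frobNorm M ^ 2 = 0) : M = 0 := by
  rw [frobNorm_sq] at h
  ext i j
  have h1 := (Finset.sum_eq_zero_iff_of_nonneg
    fun i _ => Finset.sum_nonneg fun j _ => sq_nonneg (M i j)).1 h i (Finset.mem_univ _)
  have h2 := (Finset.sum_eq_zero_iff_of_nonneg fun j _ => sq_nonneg (M i j)).1 h1 j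
    (Finset.mem_univ _)
  simpa using h2

lemma IsGradientFlow.antitoneOn_risk (hderiv : ∀ s : ℝ, HasDerivAt ℓ (ℓ' s) s)
    (hflow : IsGradientFlow L ℓ' z W) :
    AntitoneOn (fun s => riskW L ℓ z (W s)) (Set.Ici 0) :=
  antitoneOn_of_hasDerivAt (fun _ ht => hflow.hasDerivAt_risk hderiv ht)
    fun _ _ => neg_nonpos.2 (gradNormSq_nonneg _)

lemma IsGradientFlow.risk_one_lt (hderiv : ∀ s : ℝ, HasDerivAt ℓ (ℓ' s) s)
    (hflow : IsGradientFlow L ℓ' z W) (hinit_grad : ∃ k < L, gradLayer L ℓ' z (W 0) k ≠ 0) :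
    riskW L ℓ z (W 1) < riskW L ℓ z (W 0) := by
  have hpos : 0 < gradNormSq L ℓ' z (W 0) := by
    obtain ⟨k, hk, hne⟩ := hinit_grad
    refine Finset.sum_pos' (fun _ _ => sq_nonneg _) ⟨k, Finset.mem_range.2 hk, ?_⟩
    exact lt_of_le_of_ne (sq_nonneg _) fun h => hne (eq_zero_of_frobNorm_sq h.symm)
  have h1 := (hasDerivAt_iff_tendsto_slope.1 (hflow.hasDerivAt_risk hderiv le_rfl)).mono_left
    (nhdsWithin_mono (0 : ℝ) (fun s (hs : s ∈ Set.Ioi (0 : ℝ)) => ne_of_gt hs))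
  have h2 := h1.eventually (gt_mem_nhds (neg_lt_zero.2 hpos))
  obtain ⟨s, hs, hs0, hs1⟩ := (h2.and (Ioo_mem_nhdsGT (show (0 : ℝ) < 1 by norm_num))).exists
  rw [slope_def_field, sub_zero] at hs
  rw [div_lt_iff₀ hs0, zero_mul] at hs
  have h4 := hflow.antitoneOn_risk hderiv (Set.mem_Ici.2 hs0.le)
    (Set.mem_Ici.2 (zero_le_one' ℝ)) hs1.le
  simp only at h4
  linarith

/-- Once the risk is strictly below `ℓ(0)`, the linear predictor stays away from the origin. -/
lemma IsGradientFlow.exists_wprod_lower (hn : 0 < n) (hz : ∀ i, z i ⬝ᵥ z i ≤ 1)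
    (hderiv : ∀ s : ℝ, HasDerivAt ℓ (ℓ' s) s)
    (hflow : IsGradientFlow L ℓ' z W) (hinit_grad : ∃ k < L, gradLayer L ℓ' z (W 0) k ≠ 0)
    (hinit_risk : riskW L ℓ z (W 0) ≤ ℓ 0) :
    ∃ δ : ℝ, 0 < δ ∧ ∀ t, 1 ≤ t → δ ≤ wprod L (W t) ⬝ᵥ wprod L (W t) := by
  have hr : riskW L ℓ z (W 1) < ℓ 0 :=
    (hflow.risk_one_lt hderiv hinit_grad).trans_le hinit_risk
  obtain ⟨ε, hε, hball⟩ := Metric.eventually_nhds_iff.1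
    ((hderiv 0).continuousAt.eventually (lt_mem_nhds hr))
  refine ⟨ε ^ 2, by positivity, fun t ht => ?_⟩
  by_contra hcon
  push Not at hcon
  have h1 : ∀ i, riskW L ℓ z (W 1) < ℓ (wprod L (W t) ⬝ᵥ z i) := fun i => by
    apply hball
    rw [Real.dist_eq, sub_zero]
    refine abs_lt_of_sq_lt_sq ?_ hε.le
    have h := dot_sq_le (wprod L (W t)) (z i)
    have := mul_le_mul_of_nonneg_left (hz i) (dot_self_nonneg (wprod L (W t)))
    linarith
  have hn' : (0 : ℝ) < n := by exact_mod_cast hn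
  have h2 : riskW L ℓ z (W 1) < riskW L ℓ z (W t) := by
    conv_rhs => rw [riskW, riskV]
    rw [lt_inv_mul_iff₀ hn']
    have hne : (Finset.univ : Finset (Fin n)).Nonempty := ⟨⟨0, hn⟩, Finset.mem_univ _⟩
    have := Finset.sum_lt_sum_of_nonempty hne fun i _ => h1 i
    simpa using this
  have h3 := hflow.antitoneOn_risk hderiv (Set.mem_Ici.2 (zero_le_one' ℝ))
    (Set.mem_Ici.2 (zero_le_one.trans ht)) ht
  simp only at h3
  linarith

lemma loss_nonneg (hderiv : ∀ s : ℝ, HasDerivAt ℓ (ℓ' s) s) (hneg : ∀ s : ℝ, ℓ' s < 0)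
    (htop : Tendsto ℓ atTop (nhds 0)) (s : ℝ) : 0 ≤ ℓ s := by
  have : Antitone ℓ := antitone_of_deriv_nonpos (fun s => (hderiv s).differentiableAt)
    fun s => by rw [(hderiv s).deriv]; exact (hneg s).le
  exact this.le_of_tendsto htop s

lemma gradRiskV_dot (w a : Fin (dim 0) → ℝ) :
    gradRiskV ℓ' z w ⬝ᵥ a = (n : ℝ)⁻¹ * ∑ i, ℓ' (w ⬝ᵥ z i) * (a ⬝ᵥ z i) := by
  rw [gradRiskV, smul_dotProduct, sum_dotProduct, smul_eq_mul]
  congr 1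
  refine Finset.sum_congr rfl fun i _ => ?_
  rw [smul_dotProduct, smul_eq_mul, dotProduct_comm a]

/-- While the bottom layer stays bounded, so do all layers and the linear predictor; hence `ℓ'` is
evaluated on a compact interval, where it is bounded away from zero, and separability bounds the
gradient of the risk from below. -/
lemma IsGradientFlow.tendsto_frobNorm_zero (hL : 1 ≤ L) (hdimL : dim L = 1) (hn : 0 < n)
    (hz : ∀ i, z i ⬝ᵥ z i ≤ 1)
    (usep : Fin (dim 0) → ℝ) (husep_unit : vecNorm usep = 1) (husep : ∀ i, 0 < usep ⬝ᵥ z i)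
    (hderiv : ∀ s : ℝ, HasDerivAt ℓ (ℓ' s) s) (hcont : Continuous ℓ')
    (hneg : ∀ s : ℝ, ℓ' s < 0) (htop : Tendsto ℓ atTop (nhds 0))
    (hflow : IsGradientFlow L ℓ' z W) (hinit_grad : ∃ k < L, gradLayer L ℓ' z (W 0) k ≠ 0)
    (hinit_risk : riskW L ℓ z (W 0) ≤ ℓ 0) :
    Tendsto (fun t => frobNorm (W t 0) ^ 2) atTop atTop := by
  have hn' : (0 : ℝ) < n := by exact_mod_cast hn
  have h01 : ∀ {t : ℝ}, 1 ≤ t → 0 ≤ t := fun h => zero_le_one.trans h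
  obtain ⟨δ, hδ, hw⟩ := hflow.exists_wprod_lower hn hz hderiv hinit_grad hinit_risk
  obtain ⟨i₀, -, hi₀⟩ := Finset.exists_min_image Finset.univ (fun i => usep ⬝ᵥ z i)
    ⟨⟨0, hn⟩, Finset.mem_univ _⟩
  set γ := usep ⬝ᵥ z i₀ with hγdef
  have hγ : 0 < γ := husep i₀
  refine tendsto_atTop_of_energy (a := 1)
    (fun t ht => hflow.hasDerivAt_risk hderiv (h01 ht))
    (fun t _ => neg_nonpos.2 (gradNormSq_nonneg _)) (fun t _ => ?_)
    (fun t ht => hflow.hasDerivAt_frobNorm_sq hL (h01 ht)) (fun t _ => sq_nonneg _) ?_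
  · exact mul_nonneg (inv_nonneg.2 hn'.le)
      (Finset.sum_nonneg fun i _ => loss_nonneg hderiv hneg htop _)
  intro R hR
  set b : ℝ := √(∏ k ∈ Finset.range L, (R + |frobNorm (W 0 k) ^ 2 - frobNorm (W 0 0) ^ 2|)) with hb
  have hb0 : 0 ≤ b := Real.sqrt_nonneg _
  have hb2 : b ^ 2 = ∏ k ∈ Finset.range L, (R + |frobNorm (W 0 k) ^ 2 - frobNorm (W 0 0) ^ 2|) :=
    Real.sq_sqrt (Finset.prod_nonneg fun k _ => by positivity)
  have hne : (Set.Icc (-b) b).Nonempty := ⟨0, by constructor <;> linarith⟩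
  obtain ⟨s₁, -, hs₁⟩ := isCompact_Icc.exists_isMaxOn hne hcont.continuousOn
  obtain ⟨s₂, -, hs₂⟩ := isCompact_Icc.exists_isMinOn hne hcont.continuousOn
  have hc1 : 0 < -ℓ' s₁ := neg_pos.2 (hneg _)
  have hc2 : 0 < -ℓ' s₂ := neg_pos.2 (hneg _)
  refine ⟨δ * (-ℓ' s₁ * γ) ^ 2 / R, 2 * (-ℓ' s₂ * b), by positivity, by positivity, ?_⟩
  intro t ht hN
  set w := wprod L (W t) with hwdef
  have hwb : w ⬝ᵥ w ≤ b ^ 2 := by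
    rw [hb2]
    refine (wprod_sq_le hdimL (W t)).trans (Finset.prod_le_prod (fun k _ => sq_nonneg _) ?_)
    intro k hk
    rw [hflow.frobNorm_sq_eq (Finset.mem_range.1 hk) (h01 ht)]
    exact add_le_add hN (le_abs_self _)
  have hzb : ∀ i, |w ⬝ᵥ z i| ≤ b := fun i => by
    refine abs_le_of_sq_le_sq ?_ hb0
    have h := dot_sq_le w (z i)
    have := mul_le_mul_of_nonneg_left (hz i) (dot_self_nonneg w)
    linarith
  have hup : ∀ i, ℓ' (w ⬝ᵥ z i) ≤ ℓ' s₁ := fun i => hs₁ (abs_le.1 (hzb i))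
  have hlo : ∀ i, ℓ' s₂ ≤ ℓ' (w ⬝ᵥ z i) := fun i => hs₂ (abs_le.1 (hzb i))
  constructor
  · have h1 : gradRiskV ℓ' z w ⬝ᵥ usep ≤ -(-ℓ' s₁ * γ) := by
      rw [gradRiskV_dot, inv_mul_le_iff₀ hn']
      have : ∑ i, ℓ' (w ⬝ᵥ z i) * (usep ⬝ᵥ z i) ≤ ∑ _i : Fin n, -(-ℓ' s₁ * γ) := by
        refine Finset.sum_le_sum fun i _ => ?_
        have e1 := hi₀ i (Finset.mem_univ _)
        have e2 := mul_le_mul_of_nonneg_right (hup i) (husep i).le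
        have e3 := mul_le_mul_of_nonneg_left e1 hc1.le
        linarith
      simpa using this
    have h2 : (-ℓ' s₁ * γ) ^ 2 ≤ (gradRiskV ℓ' z w ⬝ᵥ usep) ^ 2 := by
      have : 0 < -ℓ' s₁ * γ := by positivity
      nlinarith
    have h3 := le_frobNorm_gradLayer_zero (ℓ' := ℓ') (z := z) hL (W t) usep
      (dot_self_of_unit husep_unit)
    have h4 : frobNorm (gradLayer L ℓ' z (W t) 0) ^ 2 ≤ gradNormSq L ℓ' z (W t) :=
      Finset.single_le_sum (f := fun k => frobNorm (gradLayer L ℓ' z (W t) k) ^ 2)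
        (fun _ _ => sq_nonneg _) (Finset.mem_range.2 hL)
    have h5 : δ * (-ℓ' s₁ * γ) ^ 2 ≤ (w ⬝ᵥ w) * (gradRiskV ℓ' z w ⬝ᵥ usep) ^ 2 :=
      mul_le_mul (hw t ht) h2 (sq_nonneg _) (dot_self_nonneg _)
    have h6 : frobNorm (gradLayer L ℓ' z (W t) 0) ^ 2 * frobNorm (W t 0) ^ 2
        ≤ gradNormSq L ℓ' z (W t) * R :=
      mul_le_mul h4 hN (sq_nonneg _) (gradNormSq_nonneg _)
    rw [neg_le_neg_iff, div_le_iff₀ hR]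
    exact h5.trans (h3.trans h6)
  · rw [abs_mul, gradRiskV_dot]
    have h1 : |(n : ℝ)⁻¹ * ∑ i, ℓ' (w ⬝ᵥ z i) * (w ⬝ᵥ z i)| ≤ -ℓ' s₂ * b := by
      rw [abs_mul, abs_of_pos (inv_pos.2 hn'), inv_mul_le_iff₀ hn']
      have : ∑ i, |ℓ' (w ⬝ᵥ z i) * (w ⬝ᵥ z i)| ≤ ∑ _i : Fin n, -ℓ' s₂ * b := by
        refine Finset.sum_le_sum fun i _ => ?_
        rw [abs_mul, abs_of_neg (hneg _)]
        exact mul_le_mul (neg_le_neg (hlo i)) (hzb i) (abs_nonneg _) hc2.le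
      refine (Finset.abs_sum_le_sum_abs _ _).trans (this.trans_eq (by simp))
    have h2 : |(-2 : ℝ)| = 2 := by norm_num
    rw [h2]
    linarith

end Divergence

/-! ### Alignment of adjacent layers -/

section Alignment

variable {m n p : Type*} [Fintype m] [Fintype n] [Fintype p]

/-- Balancedness, tested against the top right singular vector of the upper layer. -/
lemma specNorm_sq_sub_le {A : Matrix p m ℝ} {B : Matrix m n ℝ} {u : p → ℝ} {v : m → ℝ}
    (h : IsTopSingularPair A u v) {D : Matrix m m ℝ} (hD : Aᵀ * A - B * Bᵀ = D) :
    specNorm A ^ 2 - frobNorm D ≤ (Bᵀ *ᵥ v) ⬝ᵥ (Bᵀ *ᵥ v) := by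
  have hv := dot_self_of_unit h.2.1
  have h1 : v ⬝ᵥ (D *ᵥ v) = specNorm A ^ 2 - (Bᵀ *ᵥ v) ⬝ᵥ (Bᵀ *ᵥ v) := by
    rw [← hD, sub_mulVec, dotProduct_sub, ← mulVec_mulVec, ← mulVec_mulVec, h.2.2.1, mulVec_smul,
      h.2.2.2, dotProduct_mulVec v B, ← mulVec_transpose]
    simp only [dotProduct_smul, hv, smul_eq_mul]
    ring
  have h2 := dot_sq_le v (D *ᵥ v)
  have h3 := mulVec_sq_le D v
  rw [hv, one_mul] at h2
  rw [hv, mul_one] at h3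
  have h4 := (abs_le_of_sq_le_sq' (h2.trans h3) (frobNorm_nonneg D)).2
  linarith

lemma IsTopSingularPair.specNorm_le (M : Matrix m n ℝ) {u : m → ℝ} {v : n → ℝ}
    (h : IsTopSingularPair M u v) : specNorm M ≤ frobNorm M :=
  (abs_le_of_sq_le_sq' h.specNorm_sq_le (frobNorm_nonneg M)).2

lemma tendsto_of_tendsto_sq {f : ℝ → ℝ} {a : ℝ}
    (h : Tendsto (fun t => f t ^ 2) atTop (nhds (a ^ 2))) (ha : 0 ≤ a) :
    Tendsto (fun t => |f t|) atTop (nhds a) := by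
  have := (Real.continuous_sqrt.tendsto _).comp h
  rw [Real.sqrt_sq ha] at this
  exact this.congr fun t => Real.sqrt_sq_eq_abs _

lemma tendsto_one_sub_div {g : ℝ → ℝ} (hg : Tendsto g atTop atTop) (C : ℝ) :
    Tendsto (fun t => 1 - C / g t) atTop (nhds 1) := by
  simpa using (tendsto_const_nhds (x := (1 : ℝ))).sub (hg.const_div_atTop C)

variable {dim : ℕ → ℕ} {L n : ℕ} {ℓ' : ℝ → ℝ} {z : Fin n → Fin (dim 0) → ℝ}
  {W : ℝ → Layers dim} {u : ℝ → ∀ k : ℕ, Fin (dim (k+1)) → ℝ} {v : ℝ → ∀ k : ℕ, Fin (dim k) → ℝ}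

/-- The singular values below the top one stay bounded: for the last layer there are none, and
balancedness passes a bound from each layer to the one below it. -/
lemma IsGradientFlow.exists_gap_bound (hdimL : dim L = 1) (hflow : IsGradientFlow L ℓ' z W)
    (hsv : ∀ t : ℝ, 0 ≤ t → ∀ k < L, IsTopSingularPair (W t k) (u t k) (v t k))
    (d k : ℕ) (hk : k + 1 + d = L) :
    ∃ C, ∀ t : ℝ, 0 ≤ t → frobNorm (W t k) ^ 2 - specNorm (W t k) ^ 2 ≤ C := by
  induction d generalizing k with
  | zero =>
    refine ⟨0, fun t ht => ?_⟩
    have : Unique (Fin (dim (k + 1))) := by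
      rw [show k + 1 = L from hk, hdimL]; infer_instance
    rw [(hsv t ht k (by omega)).frobNorm_eq_of_unique, sub_self]
  | succ d ih =>
    obtain ⟨C, hC⟩ := ih (k + 1) (by omega)
    refine ⟨C - (frobNorm (W 0 (k + 1)) ^ 2 - frobNorm (W 0 k) ^ 2)
      + frobNorm ((W 0 (k + 1))ᵀ * W 0 (k + 1) - W 0 k * (W 0 k)ᵀ), fun t ht => ?_⟩
    have h1 := hsv t ht (k + 1) (by omega)
    have h2 := specNorm_sq_sub_le h1 (hflow.balanced (show k + 1 < L by omega) ht)
    have h3 := _root_.transpose_mulVec_sq_le (W t k) (dot_self_of_unit h1.2.1)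
    have h4 := hflow.frobNorm_balanced (show k + 1 < L by omega) ht
    have h5 := hC t ht
    linarith

lemma tendsto_specNorm_sq {k : ℕ} {C : ℝ}
    (hF : Tendsto (fun t => frobNorm (W t k) ^ 2) atTop atTop)
    (hC : ∀ t : ℝ, 0 ≤ t → frobNorm (W t k) ^ 2 - specNorm (W t k) ^ 2 ≤ C) :
    Tendsto (fun t => specNorm (W t k) ^ 2) atTop atTop := by
  refine tendsto_atTop_mono' _ ?_ (tendsto_atTop_add_const_right _ (-C) hF)
  filter_upwards [eventually_ge_atTop 0] with t ht
  linarith [hC t ht]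

lemma tendsto_ratio {k : ℕ} {C : ℝ}
    (hF : Tendsto (fun t => frobNorm (W t k) ^ 2) atTop atTop)
    (hC : ∀ t : ℝ, 0 ≤ t → frobNorm (W t k) ^ 2 - specNorm (W t k) ^ 2 ≤ C)
    (hsv : ∀ t : ℝ, 0 ≤ t → IsTopSingularPair (W t k) (u t k) (v t k)) :
    Tendsto (fun t => specNorm (W t k) / frobNorm (W t k)) atTop (nhds 1) := by
  have h : Tendsto (fun t => (specNorm (W t k) / frobNorm (W t k)) ^ 2) atTop (nhds (1 ^ 2)) := by
    rw [one_pow]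
    refine tendsto_of_tendsto_of_tendsto_of_le_of_le' (tendsto_one_sub_div hF C)
      tendsto_const_nhds ?_ ?_
    · filter_upwards [eventually_ge_atTop 0, hF.eventually_gt_atTop 0] with t ht hpos
      rw [div_pow, le_div_iff₀ hpos, sub_mul, div_mul_cancel₀ _ hpos.ne']
      linarith [hC t ht]
    · filter_upwards [eventually_ge_atTop 0, hF.eventually_gt_atTop 0] with t ht hpos
      rw [div_pow, div_le_one hpos]
      exact (hsv t ht).specNorm_sq_le
  refine (tendsto_of_tendsto_sq h zero_le_one).congr fun t => ?_
  exact abs_of_nonneg (div_nonneg (specNorm_nonneg _) (frobNorm_nonneg _))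

lemma tendsto_rank_one {k : ℕ} {C : ℝ}
    (hF : Tendsto (fun t => frobNorm (W t k) ^ 2) atTop atTop)
    (hC : ∀ t : ℝ, 0 ≤ t → frobNorm (W t k) ^ 2 - specNorm (W t k) ^ 2 ≤ C)
    (hsv : ∀ t : ℝ, 0 ≤ t → IsTopSingularPair (W t k) (u t k) (v t k)) :
    Tendsto (fun t : ℝ =>
        frobNorm ((frobNorm (W t k))⁻¹ • W t k - vecMulVec (u t k) (v t k)))
      atTop (nhds 0) := by
  have h1 := tendsto_ratio hF hC hsv
  have h2 : Tendsto (fun t : ℝ =>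
      frobNorm ((frobNorm (W t k))⁻¹ • W t k - vecMulVec (u t k) (v t k)) ^ 2)
      atTop (nhds (0 ^ 2)) := by
    have h3 : Tendsto (fun t => 2 - 2 * (specNorm (W t k) / frobNorm (W t k)))
        atTop (nhds (0 ^ 2)) := by
      convert (tendsto_const_nhds (x := (2 : ℝ))).sub (h1.const_mul 2) using 2
      norm_num
    refine h3.congr' ?_
    filter_upwards [eventually_ge_atTop 0, hF.eventually_gt_atTop 0] with t ht hpos
    have hne : frobNorm (W t k) ≠ 0 := fun h0 => by rw [h0] at hpos; norm_num at hpos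
    have h4 := frobNorm_smul_sub_sq (hsv t ht) (frobNorm (W t k))⁻¹ 1
    rw [one_smul] at h4
    rw [h4]
    field_simp
    ring
  exact (tendsto_of_tendsto_sq h2 le_rfl).congr fun t => abs_of_nonneg (frobNorm_nonneg _)

lemma IsGradientFlow.tendsto_align (hflow : IsGradientFlow L ℓ' z W)
    (hsv : ∀ t : ℝ, 0 ≤ t → ∀ k < L, IsTopSingularPair (W t k) (u t k) (v t k))
    {k : ℕ} (hk : k + 1 < L) {C C' : ℝ}
    (hF : Tendsto (fun t => frobNorm (W t k) ^ 2) atTop atTop)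
    (hC : ∀ t : ℝ, 0 ≤ t → frobNorm (W t k) ^ 2 - specNorm (W t k) ^ 2 ≤ C)
    (hC' : ∀ t : ℝ, 0 ≤ t → frobNorm (W t (k + 1)) ^ 2 - specNorm (W t (k + 1)) ^ 2 ≤ C') :
    Tendsto (fun t : ℝ => |v t (k+1) ⬝ᵥ u t k|) atTop (nhds 1) := by
  refine tendsto_of_tendsto_sq ?_ zero_le_one
  rw [one_pow]
  set E := C + C' - (frobNorm (W 0 (k + 1)) ^ 2 - frobNorm (W 0 k) ^ 2)
    + frobNorm ((W 0 (k + 1))ᵀ * W 0 (k + 1) - W 0 k * (W 0 k)ᵀ)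
  have hS := tendsto_specNorm_sq hF hC
  refine tendsto_of_tendsto_of_tendsto_of_le_of_le' (tendsto_one_sub_div hS E)
    tendsto_const_nhds ?_ ?_
  · filter_upwards [eventually_ge_atTop 0, hS.eventually_gt_atTop 0] with t ht hpos
    have h1 := hsv t ht (k + 1) hk
    have h0 := hsv t ht k (by omega)
    have h2 := specNorm_sq_sub_le h1 (hflow.balanced hk ht)
    have h3 := h0.transpose_mulVec_sq_le (dot_self_of_unit h1.2.1)
    have h4 := hflow.frobNorm_balanced hk ht
    have h5 := hC t ht
    have h6 := hC' t ht
    have h7 := h0.specNorm_sq_le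
    have h8 : (1 - E / specNorm (W t k) ^ 2) * specNorm (W t k) ^ 2
        ≤ (v t (k + 1) ⬝ᵥ u t k) ^ 2 * specNorm (W t k) ^ 2 := by
      rw [sub_mul, div_mul_cancel₀ _ hpos.ne']
      simp only [E]
      linarith
    exact le_of_mul_le_mul_right h8 hpos
  · filter_upwards [eventually_ge_atTop 0] with t ht
    have h := dot_sq_le (v t (k + 1)) (u t k)
    rwa [dot_self_of_unit (hsv t ht (k + 1) hk).2.1, dot_self_of_unit (hsv t ht k (by omega)).1,
      one_mul] at h

/-- The image of the bottom right singular vector `v₀` under the first `j` layers, each normalized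
by its Frobenius norm. -/
def partialImage (W : Layers dim) (v₀ : Fin (dim 0) → ℝ) (j : ℕ) : Fin (dim j) → ℝ :=
  (∏ k ∈ Finset.range j, frobNorm (W k))⁻¹ • (prodUpTo W j *ᵥ v₀)

lemma partialImage_sq_le (W : Layers dim) {v₀ : Fin (dim 0) → ℝ} (hv : v₀ ⬝ᵥ v₀ = 1) (j : ℕ) :
    partialImage W v₀ j ⬝ᵥ partialImage W v₀ j ≤ 1 := by
  have h := prodUpTo_mulVec_sq_le W v₀ j
  rw [hv, mul_one, Finset.prod_pow] at h
  rw [partialImage, smul_dotProduct, dotProduct_smul, smul_eq_mul, smul_eq_mul, ← mul_assoc,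
    ← mul_inv, ← sq]
  exact inv_mul_le_one_of_le₀ h (sq_nonneg _)

lemma IsTopSingularPair.dot_partialImage {W : Layers dim} (v₀ : Fin (dim 0) → ℝ) {j : ℕ}
    {a : Fin (dim (j + 1)) → ℝ} {b : Fin (dim j) → ℝ} (h : IsTopSingularPair (W j) a b) :
    a ⬝ᵥ partialImage W v₀ (j + 1)
      = specNorm (W j) / frobNorm (W j) * (b ⬝ᵥ partialImage W v₀ j) := by
  simp only [partialImage]
  rw [prodUpTo, ← mulVec_mulVec, dotProduct_smul, dotProduct_smul, dotProduct_mulVec,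
    ← mulVec_transpose, h.2.2.2, smul_dotProduct, Finset.prod_range_succ, mul_inv]
  simp only [smul_eq_mul]
  ring

/-- Alignment propagates upwards through the layers: `u_j` is aligned with the image of `v_j`, and
`v_{j+1}` with `u_j`. -/
lemma tendsto_partialImage
    (hsv : ∀ t : ℝ, 0 ≤ t → ∀ k < L, IsTopSingularPair (W t k) (u t k) (v t k))
    (hratio : ∀ k < L, Tendsto (fun t => specNorm (W t k) / frobNorm (W t k)) atTop (nhds 1))
    (halign : ∀ k : ℕ, k + 1 < L → Tendsto (fun t : ℝ => |v t (k+1) ⬝ᵥ u t k|) atTop (nhds 1))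
    {j : ℕ} (hj : j < L) :
    Tendsto (fun t => |u t j ⬝ᵥ partialImage (W t) (v t 0) (j + 1)|) atTop (nhds 1) := by
  have hstep : ∀ i < L,
      Tendsto (fun t => |v t i ⬝ᵥ partialImage (W t) (v t 0) i|) atTop (nhds 1) →
      Tendsto (fun t => |u t i ⬝ᵥ partialImage (W t) (v t 0) (i + 1)|) atTop (nhds 1) := by
    intro i hi hpre
    have h := (hratio i hi).mul hpre
    rw [one_mul] at h
    refine h.congr' ?_
    filter_upwards [eventually_ge_atTop 0] with t ht
    rw [(hsv t ht i hi).dot_partialImage, abs_mul,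
      abs_of_nonneg (div_nonneg (specNorm_nonneg _) (frobNorm_nonneg _))]
  refine hstep j hj ?_
  induction j with
  | zero =>
    refine tendsto_const_nhds.congr' ?_
    filter_upwards [eventually_ge_atTop 0] with t ht
    simp [partialImage, prodUpTo, dot_self_of_unit (hsv t ht 0 hj).2.1]
  | succ j ih =>
    have hj' : j < L := by omega
    have ha := halign j hj
    have hup := hstep j hj' (ih hj')
    set x := fun t => v t (j + 1) ⬝ᵥ u t j
    set y := fun t => u t j ⬝ᵥ partialImage (W t) (v t 0) (j + 1)
    set q := fun t => v t (j + 1) ⬝ᵥ partialImage (W t) (v t 0) (j + 1)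
    have herr : Tendsto (fun t => (q t - x t * y t) ^ 2) atTop (nhds (0 ^ 2)) := by
      have hb : Tendsto (fun t => (1 - |x t| ^ 2) * (1 - |y t| ^ 2)) atTop (nhds (0 ^ 2)) := by
        convert ((ha.pow 2).const_sub 1).mul ((hup.pow 2).const_sub 1) using 2
        norm_num
      rw [zero_pow two_ne_zero] at hb ⊢
      refine squeeze_zero' (Eventually.of_forall fun t => sq_nonneg _) ?_ hb
      filter_upwards [eventually_ge_atTop 0] with t ht
      have := dot_near (u t j) (v t (j + 1)) (partialImage (W t) (v t 0) (j + 1))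
        (dot_self_of_unit (hsv t ht j hj').1) (dot_self_of_unit (hsv t ht (j + 1) hj).2.1)
        (partialImage_sq_le _ (dot_self_of_unit (hsv t ht 0 (by omega)).2.1) _)
      simpa only [sq_abs] using this
    have herr' := tendsto_of_tendsto_sq herr le_rfl
    have hxy : Tendsto (fun t => |x t| * |y t|) atTop (nhds 1) := by
      simpa using ha.mul hup
    have hdiff : Tendsto (fun t => |q t| - |x t| * |y t|) atTop (nhds 0) := by
      refine squeeze_zero_norm (fun t => ?_) herr'
      rw [Real.norm_eq_abs, ← abs_mul]
      exact abs_abs_sub_abs_le_abs_sub _ _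
    simpa using hdiff.add hxy

end Alignment

theorem stmt6
    (dim : ℕ → ℕ) (L n : ℕ) (hL : 1 ≤ L) (hdimL : dim L = 1) (hn : 0 < n)
    (x : Fin n → Fin (dim 0) → ℝ) (y : Fin n → ℝ) (z : Fin n → Fin (dim 0) → ℝ)
    (hx : ∀ i, vecNorm (x i) ≤ 1) (hy : ∀ i, y i = 1 ∨ y i = -1)
    (hz : ∀ i, z i = y i • x i)
    (usep : Fin (dim 0) → ℝ) (husep_unit : vecNorm usep = 1)
    (husep : ∀ i, 0 < usep ⬝ᵥ z i)
    (ℓ ℓ' : ℝ → ℝ) (hderiv : ∀ s : ℝ, HasDerivAt ℓ (ℓ' s) s) (hcont : Continuous ℓ')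
    (hneg : ∀ s : ℝ, ℓ' s < 0)
    (hbot : Tendsto ℓ atBot atTop) (htop : Tendsto ℓ atTop (nhds 0))
    (W : ℝ → Layers dim) (hflow : IsGradientFlow L ℓ' z W)
    (hinit_grad : ∃ k < L, gradLayer L ℓ' z (W 0) k ≠ 0)
    (hinit_risk : riskW L ℓ z (W 0) ≤ ℓ 0)
    (u : ℝ → ∀ k : ℕ, Fin (dim (k+1)) → ℝ) (v : ℝ → ∀ k : ℕ, Fin (dim k) → ℝ)
    (hsv : ∀ t : ℝ, 0 ≤ t → ∀ k < L, IsTopSingularPair (W t k) (u t k) (v t k)) :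
    (∀ k < L, Tendsto (fun t : ℝ =>
        frobNorm ((frobNorm (W t k))⁻¹ • W t k - vecMulVec (u t k) (v t k)))
      atTop (nhds 0))
    ∧ (∀ k : ℕ, k + 1 < L →
        Tendsto (fun t : ℝ => |v t (k+1) ⬝ᵥ u t k|) atTop (nhds 1))
    ∧ Tendsto (fun t : ℝ =>
        |wprod L (W t) ⬝ᵥ v t 0 / ∏ k ∈ Finset.range L, frobNorm (W t k)|)
      atTop (nhds 1)
    ∧ Tendsto (fun t : ℝ => vecNorm (wprod L (W t))) atTop atTop := by
  have hzz : ∀ i, z i ⬝ᵥ z i ≤ 1 := fun i => by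
    have h1 : x i ⬝ᵥ x i ≤ 1 := by
      rw [← vecNorm_sq]
      exact pow_le_one₀ (vecNorm_nonneg _) (hx i)
    have h2 : y i * y i = 1 := by
      rcases hy i with h | h <;> rw [h] <;> norm_num
    rw [hz i, smul_dotProduct, dotProduct_smul, smul_eq_mul, smul_eq_mul, ← mul_assoc, h2, one_mul]
    exact h1
  have hF0 := hflow.tendsto_frobNorm_zero hL hdimL hn hzz usep husep_unit husep hderiv hcont hneg
    htop hinit_grad hinit_risk
  have hF : ∀ k < L, Tendsto (fun t => frobNorm (W t k) ^ 2) atTop atTop := fun k hk => by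
    refine (tendsto_atTop_add_const_right _
      (frobNorm (W 0 k) ^ 2 - frobNorm (W 0 0) ^ 2) hF0).congr' ?_
    filter_upwards [eventually_ge_atTop 0] with t ht
    exact (hflow.frobNorm_sq_eq hk ht).symm
  have hgap : ∀ k < L, ∃ C, ∀ t : ℝ, 0 ≤ t →
      frobNorm (W t k) ^ 2 - specNorm (W t k) ^ 2 ≤ C := fun k hk =>
    hflow.exists_gap_bound hdimL hsv (L - (k + 1)) k (by omega)
  have hratio : ∀ k < L,
      Tendsto (fun t => specNorm (W t k) / frobNorm (W t k)) atTop (nhds 1) := fun k hk => by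
    obtain ⟨C, hC⟩ := hgap k hk
    exact tendsto_ratio (hF k hk) hC fun t ht => hsv t ht k hk
  have halign : ∀ k : ℕ, k + 1 < L →
      Tendsto (fun t : ℝ => |v t (k+1) ⬝ᵥ u t k|) atTop (nhds 1) := fun k hk => by
    obtain ⟨C, hC⟩ := hgap k (by omega)
    obtain ⟨C', hC'⟩ := hgap (k + 1) hk
    exact hflow.tendsto_align hsv hk (hF k (by omega)) hC hC'
  have hthird : Tendsto (fun t : ℝ =>
      |wprod L (W t) ⬝ᵥ v t 0 / ∏ k ∈ Finset.range L, frobNorm (W t k)|) atTop (nhds 1) := by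
    have hsq : ∀ t, (wprod L (W t) ⬝ᵥ v t 0 / ∏ k ∈ Finset.range L, frobNorm (W t k)) ^ 2
        = partialImage (W t) (v t 0) L ⬝ᵥ partialImage (W t) (v t 0) L := fun t => by
      rw [div_pow, wprod_dot_sq_eq hdimL, partialImage, smul_dotProduct, dotProduct_smul,
        smul_eq_mul, smul_eq_mul]
      ring
    refine tendsto_of_tendsto_sq ?_ zero_le_one
    simp only [hsq, one_pow]
    obtain ⟨j, rfl⟩ : ∃ j, L = j + 1 := ⟨L - 1, by omega⟩
    have h1 := (tendsto_partialImage hsv hratio halign (Nat.lt_succ_self j)).pow 2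
    rw [one_pow] at h1
    refine tendsto_of_tendsto_of_tendsto_of_le_of_le' h1 tendsto_const_nhds ?_ ?_
    · filter_upwards [eventually_ge_atTop 0] with t ht
      have h := dot_sq_le (u t j) (partialImage (W t) (v t 0) (j + 1))
      rwa [dot_self_of_unit (hsv t ht j (Nat.lt_succ_self j)).1, one_mul, ← sq_abs] at h
    · filter_upwards [eventually_ge_atTop 0] with t ht
      exact partialImage_sq_le _ (dot_self_of_unit (hsv t ht 0 hL).2.1) _
  refine ⟨fun k hk => ?_, halign, hthird, ?_⟩
  · obtain ⟨C, hC⟩ := hgap k hk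
    exact tendsto_rank_one (hF k hk) hC fun t ht => hsv t ht k hk
  have hFk : ∀ k < L, Tendsto (fun t => frobNorm (W t k)) atTop atTop := fun k hk =>
    (Real.tendsto_sqrt_atTop.comp (hF k hk)).congr fun t => Real.sqrt_sq (frobNorm_nonneg _)
  have hprod : ∀ j < L,
      Tendsto (fun t => ∏ k ∈ Finset.range (j + 1), frobNorm (W t k)) atTop atTop := by
    intro j
    induction j with
    | zero => intro hj; simpa using hFk 0 hj
    | succ j ih =>
      intro hj
      simp only [Finset.prod_range_succ _ (j + 1)]
      exact (ih (by omega)).atTop_mul_atTop₀ (hFk (j + 1) hj)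
  have hP : Tendsto (fun t => ∏ k ∈ Finset.range L, frobNorm (W t k)) atTop atTop := by
    have h := hprod (L - 1) (by omega)
    rwa [Nat.sub_add_cancel hL] at h
  refine tendsto_atTop_mono' _ ?_ (hthird.pos_mul_atTop one_pos hP)
  filter_upwards [eventually_ge_atTop 0, hP.eventually_gt_atTop 0] with t ht hpos
  rw [abs_div, abs_of_pos hpos, div_mul_cancel₀ _ hpos.ne']
  refine abs_le_of_sq_le_sq ?_ (vecNorm_nonneg _)
  have h := dot_sq_le (wprod L (W t)) (v t 0)
  rwa [dot_self_of_unit (hsv t ht 0 hL).2.1, mul_one, ← vecNorm_sq] at h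

end
end

section
/- Suppose d ≥ 2, the support vectors span ℝ^d, and there exist coefficients α_i > 0 for i ∈ S with ∑_{i∈S} α_i z_i = ū. Then α := min_{‖ξ‖=1, ξ ⟂ ū} max_{i∈S} ⟨ξ, z_i⟩ > 0. -/
/-!
The unit sphere of the hyperplane `ubar⊥` is compact (`isCompact_unit_perp`), and nonempty since
`d ≥ 2` (`exists_unit_perp`), so the continuous function `ξ ↦ max_{i ∈ S} ⟨ξ, zᵢ⟩`
attains its minimum there, and it suffices to see that it is
positive at every such `ξ` (`exists_pos_dotProduct`). If instead `⟨ξ, zᵢ⟩ ≤ 0` for all support vectors, then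
`0 = ⟨ξ, ubar⟩ = ∑ aᵢ ⟨ξ, zᵢ⟩` with all `aᵢ > 0` on `S` forces `⟨ξ, zᵢ⟩ = 0` for each of them; as
they span `ℝ^d`, this gives `ξ = 0`, contradicting `‖ξ‖ = 1`.
-/

open Matrix Filter
open scoped BigOperators

noncomputable section

lemma vecNorm_eq_one_iff {d : ℕ} (v : Fin d → ℝ) : vecNorm v = 1 ↔ v ⬝ᵥ v = 1 := by
  simp only [vecNorm, Real.sqrt_eq_one, dotProduct, pow_two]

lemma isCompact_unit_perp {d : ℕ} (u : Fin d → ℝ) :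
    IsCompact {ξ : Fin d → ℝ | vecNorm ξ = 1 ∧ ξ ⬝ᵥ u = 0} := by
  apply Metric.isCompact_of_isClosed_isBounded
  · apply IsClosed.inter
    · exact isClosed_eq (by unfold vecNorm; fun_prop) continuous_const
    · exact isClosed_eq (by unfold dotProduct; fun_prop) continuous_const
  · -- `Fin d → ℝ` carries the sup norm, which the Euclidean norm dominates.
    refine (Metric.isBounded_closedBall (x := (0 : Fin d → ℝ)) (r := 1)).subset ?_
    rintro ξ ⟨h1, -⟩
    rw [mem_closedBall_zero_iff, pi_norm_le_iff_of_nonneg zero_le_one]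
    intro i
    rw [Real.norm_eq_abs, ← sq_le_one_iff_abs_le_one]
    have h : ∑ j, ξ j ^ 2 = 1 := by simpa [vecNorm] using h1
    rw [← h]
    exact Finset.single_le_sum (f := fun j => ξ j ^ 2) (fun j _ => sq_nonneg _)
      (Finset.mem_univ i)

lemma exists_unit_perp {d : ℕ} (hd : 2 ≤ d) (u : Fin d → ℝ) :
    ∃ ξ : Fin d → ℝ, vecNorm ξ = 1 ∧ ξ ⬝ᵥ u = 0 := by
  have hker : LinearMap.ker (dotProductBilin ℝ ℝ u) ≠ ⊥ := by
    apply LinearMap.ker_ne_bot_of_finrank_lt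
    simp only [Module.finrank_self, Module.finrank_fin_fun]
    omega
  obtain ⟨v, hv, hv0⟩ := Submodule.exists_mem_ne_zero_of_ne_bot hker
  have hv' : v ⬝ᵥ u = 0 := by
    rw [dotProduct_comm]
    exact hv
  have hpos : 0 < v ⬝ᵥ v := by
    refine lt_of_le_of_ne (Finset.sum_nonneg fun i _ => mul_self_nonneg _) fun h => hv0 ?_
    exact dotProduct_self_eq_zero.mp h.symm
  refine ⟨(√(v ⬝ᵥ v))⁻¹ • v, ?_, ?_⟩
  · rw [vecNorm_eq_one_iff, smul_dotProduct, dotProduct_smul, smul_eq_mul, smul_eq_mul,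
      ← mul_assoc, ← mul_inv, Real.mul_self_sqrt hpos.le, inv_mul_cancel₀ hpos.ne']
  · rw [smul_dotProduct, hv', smul_zero]

/-- A nonzero `ξ ⟂ u` has positive inner product with some vector of a spanning family of which
`u` is a positive combination. -/
lemma exists_pos_dotProduct {d n : ℕ} {z : Fin n → Fin d → ℝ} {u : Fin d → ℝ} {p : Fin n → Prop}
    {a : Fin n → ℝ} (hspan : Submodule.span ℝ {w : Fin d → ℝ | ∃ i, p i ∧ w = z i} = ⊤)
    (ha_pos : ∀ i, p i → 0 < a i) (ha_supp : ∀ i, ¬ p i → a i = 0)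
    (ha_sum : ∑ i, a i • z i = u) {ξ : Fin d → ℝ} (hξ : ξ ≠ 0) (hperp : ξ ⬝ᵥ u = 0) :
    ∃ i, p i ∧ 0 < ξ ⬝ᵥ z i := by
  by_contra! hcon
  have hterm : ∀ i, a i * (ξ ⬝ᵥ z i) ≤ 0 := fun i => by
    by_cases hi : p i
    · exact mul_nonpos_of_nonneg_of_nonpos (ha_pos i hi).le (hcon i hi)
    · simp [ha_supp i hi]
  have hsum : ∑ i, a i * (ξ ⬝ᵥ z i) = 0 := by
    rw [← hperp, ← ha_sum, dotProduct_sum]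
    simp only [dotProduct_smul, smul_eq_mul]
  have hzero : ∀ i, p i → ξ ⬝ᵥ z i = 0 := fun i hi =>
    (mul_eq_zero.mp ((Finset.sum_eq_zero_iff_of_nonpos fun i _ => hterm i).mp hsum i
      (Finset.mem_univ i))).resolve_left (ha_pos i hi).ne'
  have hle : Submodule.span ℝ {w : Fin d → ℝ | ∃ i, p i ∧ w = z i} ≤
      LinearMap.ker (dotProductBilin ℝ ℝ ξ) := by
    rw [Submodule.span_le]
    rintro w ⟨i, hi, rfl⟩
    exact hzero i hi
  have hself : ξ ⬝ᵥ ξ = 0 := hle (hspan ▸ Submodule.mem_top : ξ ∈ _)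
  exact hξ (dotProduct_self_eq_zero.mp hself)

theorem stmt7
    (d n : ℕ) (hn : 0 < n)
    (x : Fin n → Fin d → ℝ) (y : Fin n → ℝ) (z : Fin n → Fin d → ℝ)
    (hx : ∀ i, vecNorm (x i) ≤ 1) (hy : ∀ i, y i = 1 ∨ y i = -1)
    (hz : ∀ i, z i = y i • x i)
    (usep : Fin d → ℝ) (husep_unit : vecNorm usep = 1)
    (husep : ∀ i, 0 < usep ⬝ᵥ z i)
    (γ : ℝ) (hγ : 0 < γ) (ubar : Fin d → ℝ) (hubar_unit : vecNorm ubar = 1)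
    (hubar_margin : ∀ i, γ ≤ ubar ⬝ᵥ z i)
    (hubar_max : ∀ u' : Fin d → ℝ, vecNorm u' = 1 → ∃ i, u' ⬝ᵥ z i ≤ γ)
    (hd : 2 ≤ d)
    (hspan : Submodule.span ℝ {w : Fin d → ℝ | ∃ i, ubar ⬝ᵥ z i = γ ∧ w = z i} = ⊤)
    (a : Fin n → ℝ) (ha_pos : ∀ i, ubar ⬝ᵥ z i = γ → 0 < a i)
    (ha_supp : ∀ i, ubar ⬝ᵥ z i ≠ γ → a i = 0)
    (ha_sum : ∑ i, a i • z i = ubar) :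
    0 < alphaConst z ubar γ := by
  classical
  have hex : ∀ ξ : Fin d → ℝ, vecNorm ξ = 1 → ξ ⬝ᵥ ubar = 0 →
      ∃ i, ubar ⬝ᵥ z i = γ ∧ 0 < ξ ⬝ᵥ z i := fun ξ h1 h0 => by
    refine exists_pos_dotProduct hspan ha_pos ha_supp ha_sum ?_ h0
    rintro rfl
    simp [vecNorm] at h1
  obtain ⟨ξ₀, hξ₀, hξ₀'⟩ := exists_unit_perp hd ubar
  let S : Finset (Fin n) := Finset.univ.filter fun i => ubar ⬝ᵥ z i = γ
  have hS : S.Nonempty := by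
    obtain ⟨i, hi, -⟩ := hex ξ₀ hξ₀ hξ₀'
    exact ⟨i, by simp [S, hi]⟩
  have hcont : Continuous fun ξ : Fin d → ℝ => S.sup' hS fun i => ξ ⬝ᵥ z i :=
    Continuous.finset_sup'_apply hS fun i _ => by unfold dotProduct; fun_prop
  obtain ⟨ξ₁, ⟨hξ₁, hξ₁'⟩, hmin⟩ :=
    (isCompact_unit_perp ubar).exists_isMinOn ⟨ξ₀, hξ₀, hξ₀'⟩ hcont.continuousOn
  have hpos : 0 < S.sup' hS fun i => ξ₁ ⬝ᵥ z i := by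
    obtain ⟨i, hi, hlt⟩ := hex ξ₁ hξ₁ hξ₁'
    exact (Finset.lt_sup'_iff hS).mpr ⟨i, by simp [S, hi], hlt⟩
  refine hpos.trans_le (le_csInf ⟨_, ξ₀, hξ₀, hξ₀', rfl⟩ ?_)
  rintro c ⟨ξ, hξ, hξ', rfl⟩
  refine (hmin ⟨hξ, hξ'⟩ : _ ≤ S.sup' hS fun i => ξ ⬝ᵥ z i).trans ?_
  -- The real supremum is not a junk value: it is taken over a finite set.
  have hbdd : BddAbove {r : ℝ | ∃ i : Fin n, ubar ⬝ᵥ z i = γ ∧ r = ξ ⬝ᵥ z i} := by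
    refine ((Set.finite_range fun i => ξ ⬝ᵥ z i).subset ?_).bddAbove
    rintro r ⟨i, -, rfl⟩
    exact ⟨i, rfl⟩
  exact Finset.sup'_le hS _ fun i hi => le_csSup hbdd ⟨i, (Finset.mem_filter.mp hi).2, rfl⟩

end
end

section
/- Assume α > 0 and let ℓ = ℓ_log, with R(w) := (1/n) ∑_{i=1}^n ln(1 + exp(−⟨w, z_i⟩)). For any w ∈ ℝ^d with ⟨w, ū⟩ ≥ 0 and ‖Π_⊥ w‖ ≥ 2n/(e α), it holds that ⟨Π_⊥ w, ∇R(w)⟩ ≥ 0. -/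
/-!
Write `a = ⟨w, ū⟩ ≥ 0` and `v = Π_⊥ w`, so that `⟨w, zᵢ⟩ = a ⟨ū, zᵢ⟩ + ⟨v, zᵢ⟩`. Put
`g s = e^{-s} / (1 + e^{-s})`, so that `n ⟨v, ∇R(w)⟩ = ∑ᵢ -g(⟨w, zᵢ⟩) ⟨v, zᵢ⟩`.

Every summand is at least `-e^{-aγ} / e`: it is nonnegative when `⟨v, zᵢ⟩ ≤ 0`, and otherwise
`g(s) ≤ e^{-s}`, the margin bound and `p e^{-p} ≤ 1/e` apply (`term_lower_bound`). On the other
hand, the definition of `α` applied to the direction `-v / ‖v‖` produces a support vector with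
`⟨v, zᵢ⟩ ≤ -α ‖v‖` (`exists_support_le`). Its summand is at least `e^{-aγ} α ‖v‖ / 2`
(`support_term_lower_bound`), which by the assumption on `‖v‖` is at least `n e^{-aγ} / e` and
outweighs all the others together.
-/

open Matrix Filter
open scoped BigOperators

noncomputable section

lemma vecNorm_smul {m : Type*} [Fintype m] (c : ℝ) (v : m → ℝ) :
    vecNorm (c • v) = |c| * vecNorm v := by
  unfold vecNorm
  simp only [Pi.smul_apply, smul_eq_mul, mul_pow, ← Finset.mul_sum]
  rw [Real.sqrt_mul (sq_nonneg c), Real.sqrt_sq_eq_abs]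

lemma dotProduct_self_of_vecNorm_eq_one {m : Type*} [Fintype m] {u : m → ℝ}
    (hu : vecNorm u = 1) : u ⬝ᵥ u = 1 := by
  have h : ∑ i, (u i) ^ 2 = 1 := Real.sqrt_eq_one.mp hu
  simpa [dotProduct, sq] using h

lemma projPerp_dotProduct {d : ℕ} {ubar : Fin d → ℝ} (hu : vecNorm ubar = 1)
    (w : Fin d → ℝ) : projPerp ubar w ⬝ᵥ ubar = 0 := by
  simp [projPerp, sub_dotProduct, smul_dotProduct, dotProduct_self_of_vecNorm_eq_one hu]

/-- Any nonzero vector orthogonal to `ū` is opposed by some support vector with strength at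
least `α`. -/
lemma exists_support_le {n d : ℕ} {z : Fin n → Fin d → ℝ} {ubar : Fin d → ℝ} {γ : ℝ}
    (hS : ∃ i, ubar ⬝ᵥ z i = γ) (halpha : 0 < alphaConst z ubar γ)
    {v : Fin d → ℝ} (hv : v ⬝ᵥ ubar = 0) (hpos : 0 < vecNorm v) :
    ∃ i, ubar ⬝ᵥ z i = γ ∧ v ⬝ᵥ z i ≤ -(alphaConst z ubar γ * vecNorm v) := by
  obtain ⟨i₀, hi₀⟩ := hS
  set ξ : Fin d → ℝ := (-(vecNorm v)⁻¹) • v with hξ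
  set T : Set ℝ := {r : ℝ | ∃ i : Fin n, ubar ⬝ᵥ z i = γ ∧ r = ξ ⬝ᵥ z i} with hT
  have hξ1 : vecNorm ξ = 1 := by
    rw [hξ, vecNorm_smul, abs_neg, abs_of_pos (inv_pos.mpr hpos), inv_mul_cancel₀ hpos.ne']
  have hξu : ξ ⬝ᵥ ubar = 0 := by rw [hξ, smul_dotProduct, hv, smul_zero]
  have hle : alphaConst z ubar γ ≤ sSup T := by
    refine csInf_le ?_ ⟨ξ, hξ1, hξu, rfl⟩
    -- The infimum of a set of reals that is unbounded below is `0` by convention.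
    by_contra hb
    exact halpha.ne' (Real.sInf_of_not_bddBelow hb)
  have hfin : T.Finite := by
    refine (Set.finite_range fun i => ξ ⬝ᵥ z i).subset ?_
    rintro r ⟨i, -, rfl⟩
    exact ⟨i, rfl⟩
  have hne : T.Nonempty := ⟨_, i₀, hi₀, rfl⟩
  obtain ⟨i, hi, hmax⟩ := hne.csSup_mem hfin
  refine ⟨i, hi, ?_⟩
  have h1 : ξ ⬝ᵥ z i = -((vecNorm v)⁻¹ * (v ⬝ᵥ z i)) := by
    rw [hξ, smul_dotProduct, smul_eq_mul, neg_mul]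
  have h2 : v ⬝ᵥ z i = -(ξ ⬝ᵥ z i * vecNorm v) := by
    rw [h1]
    field_simp
  rw [h2, ← hmax]
  exact neg_le_neg (mul_le_mul_of_nonneg_right hle hpos.le)

/-- Here `p = ⟨v, zᵢ⟩`, `s = ⟨w, zᵢ⟩` and `b = aγ`. -/
lemma term_lower_bound {b s p : ℝ} (hs : b + p ≤ s) :
    -(Real.exp (-b) * Real.exp (-1)) ≤ -Real.exp (-s) / (1 + Real.exp (-s)) * p := by
  have hE := Real.exp_pos (-s)
  have hB : 0 < Real.exp (-b) * Real.exp (-1) := by positivity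
  rw [neg_div, neg_mul, neg_le_neg_iff]
  rcases le_or_gt p 0 with hp | hp
  · have : Real.exp (-s) / (1 + Real.exp (-s)) * p ≤ 0 :=
      mul_nonpos_of_nonneg_of_nonpos (by positivity) hp
    linarith
  · calc Real.exp (-s) / (1 + Real.exp (-s)) * p
        ≤ Real.exp (-s) * p := by
          gcongr
          exact div_le_self hE.le (by linarith)
      _ ≤ Real.exp (-(b + p)) * Real.exp (p - 1) := by
          gcongr
          linarith [Real.add_one_le_exp (p - 1)]
      _ = Real.exp (-b) * Real.exp (-1) := by
          rw [← Real.exp_add, ← Real.exp_add]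
          congr 1
          ring

/-- The summand of a support vector opposing `v`, again with `p = ⟨v, zᵢ⟩`, `s = ⟨w, zᵢ⟩` and
`b = aγ`; here `q = α ‖v‖`, and `s ≤ b` because `⟨v, zᵢ⟩ ≤ 0`. -/
lemma support_term_lower_bound {b s p q : ℝ} (hb : 0 ≤ b) (hs : s ≤ b) (hq : 0 ≤ q)
    (hp : p ≤ -q) :
    Real.exp (-b) / 2 * q ≤ -Real.exp (-s) / (1 + Real.exp (-s)) * p := by
  have hE := Real.exp_pos (-s)
  have hF := Real.exp_pos (-b)
  have hFE : Real.exp (-b) ≤ Real.exp (-s) := Real.exp_le_exp.mpr (by linarith)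
  have hF1 : Real.exp (-b) ≤ 1 := Real.exp_le_one_iff.mpr (by linarith)
  have hg : Real.exp (-b) / 2 ≤ Real.exp (-s) / (1 + Real.exp (-s)) := by
    rw [div_le_div_iff₀ two_pos (by linarith)]
    nlinarith
  rw [neg_div, neg_mul, ← mul_neg]
  exact mul_le_mul hg (by linarith) hq (by positivity)

theorem stmt9
    (d n : ℕ) (hn : 0 < n)
    (x : Fin n → Fin d → ℝ) (y : Fin n → ℝ) (z : Fin n → Fin d → ℝ)
    (hx : ∀ i, vecNorm (x i) ≤ 1) (hy : ∀ i, y i = 1 ∨ y i = -1)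
    (hz : ∀ i, z i = y i • x i)
    (usep : Fin d → ℝ) (husep_unit : vecNorm usep = 1)
    (husep : ∀ i, 0 < usep ⬝ᵥ z i)
    (γ : ℝ) (hγ : 0 < γ) (ubar : Fin d → ℝ) (hubar_unit : vecNorm ubar = 1)
    (hubar_margin : ∀ i, γ ≤ ubar ⬝ᵥ z i)
    (hubar_max : ∀ u' : Fin d → ℝ, vecNorm u' = 1 → ∃ i, u' ⬝ᵥ z i ≤ γ)
    (halpha : 0 < alphaConst z ubar γ) :
    ∀ w : Fin d → ℝ, 0 ≤ w ⬝ᵥ ubar →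
      2 * n / (Real.exp 1 * alphaConst z ubar γ) ≤ vecNorm (projPerp ubar w) →
      0 ≤ projPerp ubar w ⬝ᵥ
            gradRiskV (fun s : ℝ => -Real.exp (-s) / (1 + Real.exp (-s))) z w := by
  intro w ha hnorm
  have hS : ∃ i, ubar ⬝ᵥ z i = γ := by
    obtain ⟨i, hi⟩ := hubar_max ubar hubar_unit
    exact ⟨i, le_antisymm hi (hubar_margin i)⟩
  set α := alphaConst z ubar γ with hα
  set v := projPerp ubar w with hv
  set a := w ⬝ᵥ ubar with ha'
  have hn' : (0 : ℝ) < n := Nat.cast_pos.mpr hn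
  have he := Real.exp_pos 1
  have hpos : 0 < vecNorm v := lt_of_lt_of_le (by positivity) hnorm
  obtain ⟨j, hj, hjv⟩ := exists_support_le hS halpha (projPerp_dotProduct hubar_unit w) hpos
  have hw : ∀ i, w ⬝ᵥ z i = a * (ubar ⬝ᵥ z i) + v ⬝ᵥ z i := by
    intro i
    simp [hv, projPerp, sub_dotProduct, smul_dotProduct, ← ha']
  set B := Real.exp (-(a * γ)) * Real.exp (-1) with hB
  have hBpos : 0 < B := by positivity
  have hterm : ∀ i, -B ≤ -Real.exp (-(w ⬝ᵥ z i)) / (1 + Real.exp (-(w ⬝ᵥ z i))) *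
      (v ⬝ᵥ z i) := by
    intro i
    apply term_lower_bound
    rw [hw i]
    linarith [mul_le_mul_of_nonneg_left (hubar_margin i) ha]
  have hq : 0 ≤ α * vecNorm v := by positivity
  have hbig : n * B ≤ -Real.exp (-(w ⬝ᵥ z j)) / (1 + Real.exp (-(w ⬝ᵥ z j))) *
      (v ⬝ᵥ z j) := by
    refine le_trans ?_ (support_term_lower_bound (b := a * γ) (by positivity) ?_ hq hjv)
    · have h1 : 2 * n * Real.exp (-1) ≤ α * vecNorm v := by
        rw [div_le_iff₀ (by positivity)] at hnorm
        rw [Real.exp_neg, ← div_eq_mul_inv, div_le_iff₀ he]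
        linarith
      have h2 := mul_le_mul_of_nonneg_left h1 (Real.exp_pos (-(a * γ))).le
      rw [hB]
      linarith
    · rw [hw j, hj]
      linarith
  unfold gradRiskV
  rw [dotProduct_smul, dotProduct_sum, smul_eq_mul]
  refine mul_nonneg (by positivity) ?_
  simp only [dotProduct_smul, smul_eq_mul]
  -- Adding `B` to each summand makes all of them nonnegative, so the `j`-th one bounds the sum.
  have hsum := Finset.single_le_sum
    (f := fun i => -Real.exp (-(w ⬝ᵥ z i)) / (1 + Real.exp (-(w ⬝ᵥ z i))) * (v ⬝ᵥ z i) + B)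
    (fun i _ => by linarith [hterm i]) (Finset.mem_univ j)
  simp only [Finset.sum_add_distrib, Finset.sum_const, Finset.card_univ, Fintype.card_fin,
    nsmul_eq_mul] at hsum
  linarith
end
end
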